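/- arXiv:1211.3766 — 2 statements merged into one kernel-verified Lean document; each statement's English description precedes it below -/
import Mathlib

section
/- Let n ≥ 2. Suppose S ⊆ ℂ^n is an irreducible Zariski closed subset defined over ℚ̄ of dimension n−1, and T ⊆ (ℂ^*)^n is an irreducible Zariski closed subset defined over ℚ̄ of dimension n−1 such that exp(S) ⊆ T. Then S is a translate of a linear subspace defined over ℚ (i.e., S is the zero locus of a polynomial of total degree one with rational coefficients), and T is a torsion translate of a subtorus of (ℂ^*)^n. -/
open MvPolynomial

noncomputable section

/-- The coordinatewise exponential map `ℂ^n → (ℂ^*)^n`,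
`z ↦ (e^{2π√-1 z_λ})_λ`. -/
def expMap (n : ℕ) (z : Fin n → ℂ) : Fin n → ℂ :=
  fun i => Complex.exp (2 * (Real.pi : ℂ) * Complex.I * z i)

/-- A subset of `ℂ^n` is Zariski closed if it is the common zero locus of a family
of polynomials with complex coefficients. -/
def ZClosed (n : ℕ) (S : Set (Fin n → ℂ)) : Prop :=
  ∃ P : Set (MvPolynomial (Fin n) ℂ), S = {z | ∀ p ∈ P, eval z p = 0}

/-- Zariski closed and defined over `ℚ̄`: the common zero locus of a family of
polynomials whose coefficients are algebraic over `ℚ`. -/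
def ZClosedQbar (n : ℕ) (S : Set (Fin n → ℂ)) : Prop :=
  ∃ P : Set (MvPolynomial (Fin n) ℂ),
    (∀ p ∈ P, ∀ m, IsAlgebraic ℚ (coeff m p)) ∧
    S = {z | ∀ p ∈ P, eval z p = 0}

/-- A subset of `(ℂ^*)^n` (viewed as the set of points of `ℂ^n` with all coordinates
nonzero) is Zariski closed if it is the common zero locus in `(ℂ^*)^n` of a family of
polynomials. -/
def ZClosedTorus (n : ℕ) (T : Set (Fin n → ℂ)) : Prop :=
  ∃ P : Set (MvPolynomial (Fin n) ℂ),
    T = {z | (∀ i, z i ≠ 0) ∧ ∀ p ∈ P, eval z p = 0}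

/-- Zariski closed in `(ℂ^*)^n` and defined over `ℚ̄`. -/
def ZClosedTorusQbar (n : ℕ) (T : Set (Fin n → ℂ)) : Prop :=
  ∃ P : Set (MvPolynomial (Fin n) ℂ),
    (∀ p ∈ P, ∀ m, IsAlgebraic ℚ (coeff m p)) ∧
    T = {z | (∀ i, z i ≠ 0) ∧ ∀ p ∈ P, eval z p = 0}

/-- A set is irreducible (with respect to a given notion of closed set) if it is
nonempty and not the union of two proper closed subsets of it. -/
def IsIrrOf {α : Type*} (Closed : Set α → Prop) (S : Set α) : Prop :=
  S.Nonempty ∧ ∀ F G : Set α, Closed F → Closed G → S ⊆ F ∪ G → S ⊆ F ∨ S ⊆ G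

/-- The dimension (with respect to a given notion of closed set) of a set `S`:
the supremum of lengths `d` of chains `Z_0 ⊊ Z_1 ⊊ ⋯ ⊊ Z_d` of nonempty
irreducible closed subsets contained in `S`. -/
def dimOf {α : Type*} (Closed : Set α → Prop) (S : Set α) : ℕ∞ :=
  sSup {e : ℕ∞ | ∃ d : ℕ, e = (d : ℕ∞) ∧
    ∃ Z : Fin (d + 1) → Set α,
      (∀ i, Closed (Z i) ∧ IsIrrOf Closed (Z i) ∧ Z i ⊆ S) ∧
      ∀ i j : Fin (d + 1), i < j → Z i ⊂ Z j}

/-- A subtorus of `(ℂ^*)^n`: the image of a homomorphism `(ℂ^*)^m → (ℂ^*)^n`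
given by an integer matrix, `x ↦ (∏_j x_j ^ a_{λ j})_λ`. -/
def IsSubtorus (n : ℕ) (T₀ : Set (Fin n → ℂ)) : Prop :=
  ∃ (m : ℕ) (a : Fin n → Fin m → ℤ),
    T₀ = {z | ∃ x : Fin m → ℂ, (∀ j, x j ≠ 0) ∧ ∀ l, z l = ∏ j, x j ^ a l j}

/-- A torsion point of `(ℂ^*)^n`: every coordinate is a root of unity. -/
def IsTorsionPoint (n : ℕ) (τ : Fin n → ℂ) : Prop :=
  ∀ i, ∃ k : ℕ, 0 < k ∧ τ i ^ k = 1

/-- A torsion translate of a subtorus: a coset `τ · T₀` with `τ` a torsion point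
and `T₀` a subtorus. -/
def IsTorsionTranslateOfSubtorus (n : ℕ) (T : Set (Fin n → ℂ)) : Prop :=
  ∃ (τ : Fin n → ℂ) (T₀ : Set (Fin n → ℂ)),
    IsTorsionPoint n τ ∧ IsSubtorus n T₀ ∧
    T = (fun z => fun i => τ i * z i) '' T₀


/-!
An irreducible `S` of codimension one is the zero set of a prime polynomial `f`. Pulling back a
polynomial that vanishes on `T` gives a nontrivial linear relation with constant coefficients, on
the hypersurface `f = 0`, between exponentials of linear forms `2πi (m · z)`. In a shortest such
relation with polynomial coefficients, comparing two terms under the tangential derivations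
`∂ⱼf ∂ᵢ - ∂ᵢf ∂ⱼ` exhibits the exponential of `2πi (m₁ - m₀) · z` as an element of the function
field of `f = 0`. Unless all these derivations kill that linear form, this is impossible, because
the exponential of a nonconstant function is transcendental over it. Hence `f` is constant in every
direction orthogonal to `m₁ - m₀`, so `S` is a hyperplane `v · z = c` with `v` integral and
primitive.

Algebraic points show that `c` and `exp (2πic)` are algebraic, so `c` is rational by the
Gelfond–Schneider theorem, which is proved by the classical auxiliary-function argument. Finally,
`exp S` is cut out in the torus by a binomial, and a prime polynomial vanishing on `T` must divide
it, which forces `T = exp S`.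
-/
/-! ### Gelfond–Schneider for `exp (2πiβ)` -/

section EntireFunctions

theorem exists_eq_prod_sub_mul_of_zeros (s : Finset ℂ) {F : ℂ → ℂ} (hF : Differentiable ℂ F)
    (hzero : ∀ a ∈ s, F a = 0) :
    ∃ H : ℂ → ℂ, Differentiable ℂ H ∧ ∀ z, F z = (∏ a ∈ s, (z - a)) * H z := by
  induction s using Finset.induction_on generalizing F with
  | empty => exact ⟨F, hF, by simp⟩
  | insert a s ha ih =>
    have hslope : ∀ z, F z = (z - a) * dslope F a z := fun z => by
      rw [← smul_eq_mul, sub_smul_dslope, hzero a (Finset.mem_insert_self a s), sub_zero]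
    have hslope_diff : Differentiable ℂ (dslope F a) := by
      rw [← differentiableOn_univ] at hF ⊢
      exact (Complex.differentiableOn_dslope Filter.univ_mem).2 hF
    have hslope_zero : ∀ b ∈ s, dslope F a b = 0 := fun b hb => by
      have hb0 := hzero b (Finset.mem_insert_of_mem hb)
      rw [hslope, mul_eq_zero, sub_eq_zero] at hb0
      exact hb0.resolve_left (by rintro rfl; exact ha hb)
    obtain ⟨H, hH, hfac⟩ := ih hslope_diff hslope_zero
    exact ⟨H, hH, fun z => by rw [hslope, hfac, Finset.prod_insert ha, mul_assoc]⟩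

/-- Dividing by `∏ (z - a)` gains a factor `4r` per zero on the circle of radius `5r`, while
multiplying back costs at most `2r` per zero on the disc of radius `r`. -/
theorem norm_le_mul_half_pow_card_of_zeros {s : Finset ℂ} {F : ℂ → ℂ} (hF : Differentiable ℂ F)
    (hzero : ∀ a ∈ s, F a = 0) {r B : ℝ} (hr : 0 < r) (hs : ∀ a ∈ s, ‖a‖ ≤ r)
    (hB : ∀ z : ℂ, ‖z‖ = 5 * r → ‖F z‖ ≤ B) {w : ℂ} (hw : ‖w‖ ≤ r) :
    ‖F w‖ ≤ B * (1 / 2) ^ s.card := by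
  obtain ⟨H, hH, hfac⟩ := exists_eq_prod_sub_mul_of_zeros s hF hzero
  have hcircle : ∀ z : ℂ, ‖z‖ = 5 * r → ‖H z‖ ≤ B / (4 * r) ^ s.card := fun z hz => by
    have hprod : (4 * r) ^ s.card ≤ ∏ a ∈ s, ‖z - a‖ := by
      rw [← Finset.prod_const]
      refine Finset.prod_le_prod (fun _ _ => by positivity) fun a ha => ?_
      linarith [norm_sub_norm_le z a, hs a ha]
    rw [le_div_iff₀ (by positivity)]
    calc ‖H z‖ * (4 * r) ^ s.card ≤ ‖H z‖ * ∏ a ∈ s, ‖z - a‖ := by gcongr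
      _ = ‖F z‖ := by rw [hfac, norm_mul, norm_prod, mul_comm]
      _ ≤ B := hB z hz
  have hdisc : ‖H w‖ ≤ B / (4 * r) ^ s.card := by
    refine Complex.norm_le_of_forall_mem_frontier_norm_le (U := Metric.ball 0 (5 * r))
      Metric.isBounded_ball hH.diffContOnCl (fun z hz => hcircle z ?_) (subset_closure ?_)
    · simpa [frontier_ball _ (show 5 * r ≠ 0 by positivity)] using hz
    · rw [mem_ball_zero_iff]
      linarith
  have hprod : ∏ a ∈ s, ‖w - a‖ ≤ (2 * r) ^ s.card := by
    rw [← Finset.prod_const]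
    refine Finset.prod_le_prod (fun _ _ => by positivity) fun a ha => ?_
    linarith [norm_sub_le w a, hs a ha]
  calc ‖F w‖ = (∏ a ∈ s, ‖w - a‖) * ‖H w‖ := by rw [hfac, norm_mul, norm_prod]
    _ ≤ (2 * r) ^ s.card * (B / (4 * r) ^ s.card) := by gcongr
    _ = B * (1 / 2) ^ s.card := by
      rw [show 1 / 2 = 2 * r / (4 * r) by field_simp; norm_num, div_pow]
      ring

theorem eq_zero_of_forall_sum_mul_pow_mul_exp_pow_eq_zero {J L : ℕ} {c : Fin J → Fin L → ℂ}
    (h : ∀ z : ℂ, ∑ j, ∑ k,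
      c j k * z ^ (j : ℕ) * Complex.exp (2 * Real.pi * Complex.I * z) ^ (k : ℕ) = 0) :
    c = 0 := by
  -- Evaluate at `z, z + 1, z + 2, …`, where the exponential does not change.
  have hcoeff : ∀ (z : ℂ) (j : Fin J),
      ∑ k, c j k * Complex.exp (2 * Real.pi * Complex.I * z) ^ (k : ℕ) = 0 := fun z =>
    congrFun <| Matrix.eq_zero_of_forall_index_sum_mul_pow_eq_zero
      (f := fun m : Fin J => z + (m : ℕ)) (fun _ _ hm => by simpa [Fin.ext_iff] using hm)
      fun m => by
      have hexp : Complex.exp (2 * Real.pi * Complex.I * (z + (m : ℕ))) =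
          Complex.exp (2 * Real.pi * Complex.I * z) := by
        rw [Complex.exp_eq_exp_iff_exists_int]
        exact ⟨m, by push_cast; ring⟩
      rw [← h (z + (m : ℕ)), hexp]
      simp only [Finset.sum_mul, mul_right_comm]
  funext j
  -- Evaluate at the logarithms of `1, 2, 3, …`.
  refine Matrix.eq_zero_of_forall_index_sum_mul_pow_eq_zero
    (f := fun m : Fin L => ((m : ℕ) : ℂ) + 1) (fun _ _ hm => by simpa [Fin.ext_iff] using hm)
    fun m => ?_
  have hlog := hcoeff (Complex.log ((m : ℕ) + 1) / (2 * Real.pi * Complex.I)) j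
  rwa [mul_div_cancel₀ _ Complex.two_pi_I_ne_zero,
    Complex.exp_log (Nat.cast_add_one_ne_zero _)] at hlog

end EntireFunctions

theorem eventually_mul_pow_lt_two_pow {Θ : ℝ} (hΘ : 1 ≤ Θ) (κ : ℕ) :
    ∀ᶠ n : ℕ in Filter.atTop, ∀ M : ℕ, M ^ 2 ≤ n →
      (Θ * n) ^ (κ * (M * n)) < 2 ^ (n * n) := by
  have hε : 0 < Real.log 2 / ((κ + 1) * √Θ) := by positivity
  have htop : Filter.Tendsto (fun n : ℕ => Θ * (n : ℝ)) Filter.atTop Filter.atTop :=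
    tendsto_natCast_atTop_atTop.const_mul_atTop (by positivity)
  filter_upwards [htop.eventually
    ((isLittleO_log_rpow_atTop (by norm_num : (0 : ℝ) < 1 / 2)).bound hε),
    Filter.eventually_ge_atTop 1] with n hlog hn M hM
  have hn1 : (1 : ℝ) ≤ n := by exact_mod_cast hn
  have hX : 1 ≤ Θ * n := one_le_mul_of_one_le_of_one_le hΘ hn1
  have hMn : (M : ℝ) ≤ √n := Real.le_sqrt_of_sq_le (by exact_mod_cast hM)
  have hlog' : Real.log (Θ * n) ≤ Real.log 2 / (κ + 1) * √n := by
    rw [Real.norm_of_nonneg (Real.log_nonneg hX), Real.norm_of_nonneg (by positivity),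
      ← Real.sqrt_eq_rpow, Real.sqrt_mul (by positivity)] at hlog
    refine hlog.trans_eq ?_
    field_simp
  rw [← Real.log_lt_log_iff (by positivity) (by positivity), Real.log_pow, Real.log_pow]
  push_cast
  calc κ * (M * n) * Real.log (Θ * n)
      ≤ κ * (√n * n) * (Real.log 2 / (κ + 1) * √n) := by
        gcongr
        exact Real.log_nonneg hX
    _ = κ / (κ + 1) * (√n * √n * n * Real.log 2) := by ring
    _ = κ / (κ + 1) * (n * n * Real.log 2) := by rw [Real.mul_self_sqrt (by positivity)]
    _ < 1 * (n * n * Real.log 2) := by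
        gcongr
        rw [div_lt_one (by positivity)]
        exact lt_add_one _
    _ = n * n * Real.log 2 := one_mul _

namespace GelfondSchneider

open Complex NumberField

variable {K : Type*} [Field K]

/-- The coefficient of the unknown `p (j, k)` in the value of `auxFun σ p` at `x + y β`, cleared
of denominators: `β = σ b` is integral and `exp (2πiβ) = σ g / D`. -/
def evalCoeff {J L : ℕ} (b g : 𝓞 K) (D x y : ℕ) (l : Fin J × Fin L) : 𝓞 K :=
  (x + y * b) ^ (l.1 : ℕ) * (g ^ (l.2 : ℕ) * (D : 𝓞 K) ^ (L - l.2)) ^ y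

/-- The auxiliary function `∑ p (j, k) z ^ j exp (2πikz)` of the Gelfond–Schneider method. -/
def auxFun {J L : ℕ} (σ : K →+* ℂ) (p : Fin J × Fin L → 𝓞 K) (z : ℂ) : ℂ :=
  ∑ l, σ (p l) * z ^ (l.1 : ℕ) * exp (2 * Real.pi * I * z) ^ (l.2 : ℕ)

theorem differentiable_auxFun {J L : ℕ} (σ : K →+* ℂ) (p : Fin J × Fin L → 𝓞 K) :
    Differentiable ℂ (auxFun σ p) := by
  unfold auxFun
  fun_prop

theorem eq_zero_of_auxFun_eq_zero {J L : ℕ} {σ : K →+* ℂ} {p : Fin J × Fin L → 𝓞 K}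
    (h : ∀ z, auxFun σ p z = 0) : p = 0 := by
  simp only [auxFun, Fintype.sum_prod_type] at h
  funext l
  have hl := congrFun₂ (eq_zero_of_forall_sum_mul_pow_mul_exp_pow_eq_zero
    (c := fun j k => σ (p (j, k))) h) l.1 l.2
  simpa using hl

theorem map_sum_evalCoeff_mul {J L : ℕ} {σ : K →+* ℂ} {b g : 𝓞 K} {D : ℕ}
    (hg : σ g = D * exp (2 * Real.pi * I * σ b)) (p : Fin J × Fin L → 𝓞 K) (x y : ℕ) :
    σ ((∑ l, evalCoeff b g D x y l * p l : 𝓞 K) : K) =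
      (D : ℂ) ^ (L * y) * auxFun σ p (x + y * σ b) := by
  have hexp : exp (2 * Real.pi * I * (x + y * σ b)) = exp (2 * Real.pi * I * σ b) ^ y := by
    rw [← exp_nat_mul, exp_eq_exp_iff_exists_int]
    exact ⟨x, by push_cast; ring⟩
  push_cast
  rw [auxFun, hexp, Finset.mul_sum, map_sum]
  refine Finset.sum_congr rfl fun l _ => ?_
  have hL : L * y = l.2 * y + (L - l.2) * y := by
    rw [← Nat.add_mul, Nat.add_sub_cancel' l.2.2.le]
  simp only [evalCoeff, map_mul, map_pow, map_add, map_natCast]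
  rw [hg, hL]
  ring

variable [NumberField K]

theorem house_natCast (n : ℕ) : house (n : K) = n := by
  simpa using house_intCast (K := K) n

theorem one_le_norm_mul_house_pow {ξ : 𝓞 K} (hξ : ξ ≠ 0) (σ : K →+* ℂ) :
    1 ≤ ‖σ ξ‖ * house (ξ : K) ^ (Module.finrank ℚ K - 1) := by
  refine le_trans ?_ (norm_norm_le_norm_mul_house_pow (ξ : K) σ)
  rw [← Algebra.coe_norm_int, Int.norm_cast_rat, Int.norm_eq_abs]
  exact_mod_cast Int.one_le_abs (Algebra.norm_ne_zero_iff.2 hξ)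

variable (K) in
/-- The constant in `NumberField.house.exists_ne_zero_int_vec_house_le` is private to Mathlib; the
metavariable standing for it is filled in by unification. -/
theorem exists_siegel_const : ∃ C : ℝ, ∀ (ι κ : Type) [Fintype ι] [Fintype κ] (N : ℕ)
    (a : Matrix ι κ (𝓞 K)) (A : ℝ),
    0 < N → Fintype.card ι = N → Fintype.card κ = 2 * N → a ≠ 0 →
    (∀ k l, house (a k l : K) ≤ A) →
    ∃ p : κ → 𝓞 K, p ≠ 0 ∧ (∀ k, ∑ l, a k l * p l = 0) ∧
      ∀ l, house (p l : K) ≤ C * (2 * N) * A := by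
  classical
  have siegel : ∃ c : ℝ, ∀ (ι κ : Type) [Fintype ι] [Fintype κ] (N : ℕ)
      (a : Matrix ι κ (𝓞 K)) (A : ℝ),
      0 < N → Fintype.card ι = N → Fintype.card κ = 2 * N → a ≠ 0 →
      (∀ k l, house (a k l : K) ≤ A) →
      ∃ p : κ → 𝓞 K, p ≠ 0 ∧ a.mulVec p = 0 ∧ ∀ l, house (p l : K) ≤
        c * ((c * (2 * N : ℕ) * A) ^ ((N : ℝ) / ((2 * N : ℕ) - N))) := by
    refine ⟨?_, fun ι κ _ _ N a A hN hι hκ ha hA => ?_⟩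
    rotate_left
    · exact house.exists_ne_zero_int_vec_house_le K a ha hN (by omega : N < 2 * N) hκ hA hι
  obtain ⟨c, hc⟩ := siegel
  refine ⟨c * c, fun ι κ _ _ N a A hN hι hκ ha hA => ?_⟩
  obtain ⟨p, hp, hap, hbound⟩ := hc ι κ N a A hN hι hκ ha hA
  refine ⟨p, hp, congrFun hap, fun l => (hbound l).trans_eq ?_⟩
  have hexponent : (N : ℝ) / ((2 * N : ℕ) - N) = 1 := by
    rw [Nat.cast_mul, Nat.cast_two, two_mul, add_sub_cancel_right, div_self (by positivity)]
  rw [hexponent, Real.rpow_one]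
  push_cast
  ring

/-- A single constant dominating every base that occurs in the estimates. -/
def scale (b g : 𝓞 K) (D : ℕ) : ℝ :=
  Real.exp (10 * Real.pi * (1 + house (b : K))) + house (g : K) + D

section Scale

variable (b g : 𝓞 K) (D : ℕ)

theorem exp_le_scale : Real.exp (10 * Real.pi * (1 + house (b : K))) ≤ scale b g D := by
  unfold scale
  linarith [house_nonneg (g : K), D.cast_nonneg (α := ℝ)]

theorem house_le_scale : house (g : K) ≤ scale b g D := by
  unfold scale
  linarith [Real.exp_pos (10 * Real.pi * (1 + house (b : K))), D.cast_nonneg (α := ℝ)]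

theorem natCast_le_scale : (D : ℝ) ≤ scale b g D := by
  unfold scale
  linarith [Real.exp_pos (10 * Real.pi * (1 + house (b : K))), house_nonneg (g : K)]

theorem five_mul_one_add_house_le_scale : 5 * (1 + house (b : K)) ≤ scale b g D := by
  nlinarith [exp_le_scale b g D, Real.add_one_le_exp (10 * Real.pi * (1 + house (b : K))),
    Real.pi_gt_three, house_nonneg (b : K)]

theorem five_le_scale : 5 ≤ scale b g D := by
  linarith [five_mul_one_add_house_le_scale b g D, house_nonneg (b : K)]

theorem one_le_scale_mul {n : ℕ} (hn : 1 ≤ n) : 1 ≤ scale b g D * n :=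
  one_le_mul_of_one_le_of_one_le (by linarith [five_le_scale b g D]) (by exact_mod_cast hn)

theorem scale_le_scale_mul {n : ℕ} (hn : 1 ≤ n) : scale b g D ≤ scale b g D * n :=
  le_mul_of_one_le_right (by linarith [five_le_scale b g D]) (by exact_mod_cast hn)

end Scale

theorem house_natCast_add_natCast_mul_le (b g : 𝓞 K) (D : ℕ) {n x y : ℕ} (hx : x ≤ n)
    (hy : y ≤ n) : house ((x : K) + y * b) ≤ scale b g D * n :=
  have hb := house_nonneg (b : K)
  calc house ((x : K) + y * b) ≤ x + y * house (b : K) := by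
        simpa only [house_natCast, house_nat_mul] using house_add_le (x : K) (y * b)
    _ ≤ n + n * house (b : K) := by gcongr
    _ = (1 + house (b : K)) * n := by ring
    _ ≤ scale b g D * n := by
        refine mul_le_mul_of_nonneg_right ?_ n.cast_nonneg
        linarith [five_mul_one_add_house_le_scale b g D]

theorem house_evalCoeff_le {J L : ℕ} (b g : 𝓞 K) (D : ℕ) {n x y : ℕ} (hn : 1 ≤ n) (hx : x ≤ n)
    (hy : y ≤ n) (l : Fin J × Fin L) :
    house (evalCoeff b g D x y l : K) ≤ (scale b g D * n) ^ (J + L * n) := by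
  set X := scale b g D * n
  have hX : 1 ≤ X := one_le_scale_mul b g D hn
  have hΘX : scale b g D ≤ X := scale_le_scale_mul b g D hn
  have hbase : house ((g : K) ^ (l.2 : ℕ) * (D : K) ^ (L - l.2)) ≤ X ^ L :=
    calc house ((g : K) ^ (l.2 : ℕ) * (D : K) ^ (L - l.2))
        ≤ house (g : K) ^ (l.2 : ℕ) * house (D : K) ^ (L - l.2) :=
          (house_mul_le _ _).trans (mul_le_mul (house_pow_le _ _) (house_pow_le _ _)
            (house_nonneg _) (pow_nonneg (house_nonneg _) _))
      _ ≤ X ^ (l.2 : ℕ) * X ^ (L - l.2) := by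
          have := house_nonneg (g : K)
          rw [house_natCast]
          gcongr
          · exact (house_le_scale b g D).trans hΘX
          · exact (natCast_le_scale b g D).trans hΘX
      _ = X ^ L := by rw [← pow_add, Nat.add_sub_cancel' l.2.2.le]
  simp only [evalCoeff, map_mul, map_pow, map_add, map_natCast]
  calc _ ≤ house ((x : K) + y * b) ^ (l.1 : ℕ) *
        house ((g : K) ^ (l.2 : ℕ) * (D : K) ^ (L - l.2)) ^ y :=
        (house_mul_le _ _).trans (mul_le_mul (house_pow_le _ _) (house_pow_le _ _)
          (house_nonneg _) (pow_nonneg (house_nonneg _) _))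
    _ ≤ X ^ (l.1 : ℕ) * (X ^ L) ^ y := by
        have := house_natCast_add_natCast_mul_le b g D hx hy
        gcongr
        · exact pow_nonneg (house_nonneg _) _
        · exact house_nonneg _
        · exact house_nonneg _
    _ ≤ X ^ J * X ^ (L * n) := by
        rw [← pow_mul]
        gcongr
        exact l.1.2.le
    _ = X ^ (J + L * n) := (pow_add _ _ _).symm

theorem pow_three_le_mul {M n : ℕ} (hn : M ^ 2 ≤ n) : M ^ 3 ≤ M * n := by
  rw [pow_succ']
  gcongr

theorem sum_le_scale_mul_pow {b g : 𝓞 K} {D M n : ℕ} (hM : 1 ≤ M) (hn : M ^ 2 ≤ n)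
    {f : Fin (2 * M ^ 3) × Fin M → ℝ} (hf : ∀ l, f l ≤ (scale b g D * n) ^ (9 * (M * n))) :
    ∑ l, f l ≤ (scale b g D * n) ^ (11 * (M * n)) := by
  have hn1 : 1 ≤ n := (Nat.one_le_pow 2 M hM).trans hn
  set X := scale b g D * n
  have hX : 1 ≤ X := one_le_scale_mul b g D hn1
  have hMn : (M : ℝ) ^ 2 ≤ n := by exact_mod_cast hn
  have hcard : 2 * (M : ℝ) ^ 4 ≤ X ^ (2 * (M * n)) :=
    calc 2 * (M : ℝ) ^ 4 = 2 * ((M : ℝ) ^ 2) ^ 2 := by ring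
      _ ≤ scale b g D ^ 2 * (n : ℝ) ^ 2 := by
          gcongr
          nlinarith [five_le_scale b g D]
      _ = X ^ 2 := (mul_pow _ _ _).symm
      _ ≤ _ := pow_le_pow_right₀ hX (Nat.le_mul_of_pos_right 2 (Nat.mul_pos hM hn1))
  calc ∑ l, f l ≤ ∑ _l : Fin (2 * M ^ 3) × Fin M, X ^ (9 * (M * n)) :=
        Finset.sum_le_sum fun l _ => hf l
    _ = 2 * (M : ℝ) ^ 4 * X ^ (9 * (M * n)) := by
        simp only [Finset.sum_const, Finset.card_univ, Fintype.card_prod, Fintype.card_fin,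
          nsmul_eq_mul]
        push_cast
        ring
    _ ≤ X ^ (2 * (M * n)) * X ^ (9 * (M * n)) := by gcongr
    _ = X ^ (11 * (M * n)) := by ring

theorem mul_scale_mul_pow_le (b g : 𝓞 K) (D : ℕ) {C : ℝ} {M n : ℕ} (hCM : C ≤ M) (hM : 1 ≤ M)
    (hn : M ^ 2 ≤ n) :
    C * (2 * (M ^ 4 : ℕ)) * (scale b g D * (M ^ 2 : ℕ)) ^ (2 * M ^ 3 + M * M ^ 2) ≤
      (scale b g D * n) ^ (6 * (M * n)) := by
  have hn1 : 1 ≤ n := (Nat.one_le_pow 2 M hM).trans hn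
  have hX : 1 ≤ scale b g D * n := one_le_scale_mul b g D hn1
  have hΘ : 5 ≤ scale b g D := five_le_scale b g D
  have hM3 : M ^ 3 ≤ M * n := pow_three_le_mul hn
  have hcoeff : C * (2 * ((M ^ 4 : ℕ) : ℝ)) ≤ (scale b g D * n) ^ 3 :=
    calc C * (2 * ((M ^ 4 : ℕ) : ℝ)) ≤ M * (2 * ((M ^ 4 : ℕ) : ℝ)) := by gcongr
      _ = 2 * (M : ℝ) ^ 5 := by push_cast; ring
      _ ≤ 2 * (M : ℝ) ^ 6 := by
          gcongr
          · exact_mod_cast hM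
          · norm_num
      _ = 2 * ((M ^ 2 : ℕ) : ℝ) ^ 3 := by push_cast; ring
      _ ≤ scale b g D ^ 3 * (n : ℝ) ^ 3 := by
          gcongr
          nlinarith [pow_le_pow_left₀ (by norm_num) hΘ 3]
      _ = _ := (mul_pow _ _ _).symm
  calc C * (2 * ((M ^ 4 : ℕ) : ℝ)) * (scale b g D * (M ^ 2 : ℕ)) ^ (2 * M ^ 3 + M * M ^ 2)
      ≤ (scale b g D * n) ^ 3 * (scale b g D * n) ^ (2 * M ^ 3 + M * M ^ 2) := by gcongr
    _ = (scale b g D * n) ^ (3 + 3 * M ^ 3) := by ring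
    _ ≤ _ := pow_le_pow_right₀ hX (by linarith [Nat.mul_pos hM hn1])

/-- Siegel's lemma, with the free parameter `M` so large that it absorbs the Siegel constant. -/
theorem eventually_exists_auxFun_vanishing (b g : 𝓞 K) (D : ℕ) :
    ∀ᶠ M : ℕ in Filter.atTop, ∃ p : Fin (2 * M ^ 3) × Fin M → 𝓞 K, p ≠ 0 ∧
      (∀ x < M ^ 2, ∀ y < M ^ 2, ∑ l, evalCoeff b g D x y l * p l = 0) ∧
      ∀ n : ℕ, M ^ 2 ≤ n → ∀ l, house (p l : K) ≤ (scale b g D * n) ^ (6 * (M * n)) := by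
  obtain ⟨C, siegel⟩ := exists_siegel_const K
  filter_upwards [Filter.eventually_ge_atTop 1, Filter.eventually_ge_atTop ⌈C⌉₊] with M hM hCM
  have hM2 : 1 ≤ M ^ 2 := Nat.one_le_pow 2 M hM
  obtain ⟨p, hp, hvanish, hbound⟩ := siegel (Fin (M ^ 2) × Fin (M ^ 2)) (Fin (2 * M ^ 3) × Fin M)
    (M ^ 4) (fun k l => evalCoeff b g D k.1 k.2 l)
    ((scale b g D * (M ^ 2 : ℕ)) ^ (2 * M ^ 3 + M * M ^ 2)) (by positivity)
    (by simp only [Fintype.card_prod, Fintype.card_fin]; ring)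
    (by simp only [Fintype.card_prod, Fintype.card_fin]; ring)
    (fun h => by
      simpa [evalCoeff] using congrFun₂ h (⟨0, hM2⟩, ⟨0, hM2⟩) (⟨0, by positivity⟩, ⟨0, hM⟩))
    (fun k l => house_evalCoeff_le b g D hM2 k.1.2.le k.2.2.le l)
  refine ⟨p, hp, fun x hx y hy => hvanish (⟨x, hx⟩, ⟨y, hy⟩), fun n hn l => (hbound l).trans ?_⟩
  exact mul_scale_mul_pow_le b g D (Nat.ceil_le.1 hCM) hM hn

section Estimates

variable {b g : 𝓞 K} {D M n : ℕ} {p : Fin (2 * M ^ 3) × Fin M → 𝓞 K}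

theorem norm_add_mul_le (σ : K →+* ℂ) {x y : ℕ} (hx : x ≤ n) (hy : y ≤ n) :
    ‖(x : ℂ) + y * σ b‖ ≤ n * (1 + house (b : K)) :=
  calc ‖(x : ℂ) + y * σ b‖ ≤ x + y * ‖σ b‖ := by
        simpa only [norm_mul, norm_natCast] using norm_add_le (x : ℂ) (y * σ b)
    _ ≤ n + n * house (b : K) := by
        gcongr
        exact norm_embedding_le_house _ σ
    _ = n * (1 + house (b : K)) := by ring

theorem house_sum_evalCoeff_mul_le (hM : 1 ≤ M) (hn : M ^ 2 ≤ n)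
    (hp : ∀ l, house (p l : K) ≤ (scale b g D * n) ^ (6 * (M * n)))
    {x y : ℕ} (hx : x ≤ n) (hy : y ≤ n) :
    house ((∑ l, evalCoeff b g D x y l * p l : 𝓞 K) : K) ≤
      (scale b g D * n) ^ (11 * (M * n)) := by
  have hn1 : 1 ≤ n := (Nat.one_le_pow 2 M hM).trans hn
  set X := scale b g D * n
  have hX : 1 ≤ X := one_le_scale_mul b g D hn1
  have hM3 : M ^ 3 ≤ M * n := pow_three_le_mul hn
  have hterm (l) : house ((evalCoeff b g D x y l * p l : 𝓞 K) : K) ≤ X ^ (9 * (M * n)) :=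
    calc house ((evalCoeff b g D x y l * p l : 𝓞 K) : K)
        ≤ house (evalCoeff b g D x y l : K) * house (p l : K) := by
          push_cast
          exact house_mul_le _ _
      _ ≤ X ^ (2 * M ^ 3 + M * n) * X ^ (6 * (M * n)) :=
          mul_le_mul (house_evalCoeff_le b g D hn1 hx hy l) (hp l) (house_nonneg _) (by positivity)
      _ = X ^ (2 * M ^ 3 + M * n + 6 * (M * n)) := (pow_add _ _ _).symm
      _ ≤ X ^ (9 * (M * n)) := pow_le_pow_right₀ hX (by omega)
  calc house ((∑ l, evalCoeff b g D x y l * p l : 𝓞 K) : K)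
      ≤ ∑ l, house ((evalCoeff b g D x y l * p l : 𝓞 K) : K) := by
        simpa only [map_sum] using house_sum_le_sum_house _ _
    _ ≤ X ^ (11 * (M * n)) := sum_le_scale_mul_pow hM hn hterm

theorem norm_exp_le (hn : 1 ≤ n) {z : ℂ} (hz : ‖z‖ = 5 * (n * (1 + house (b : K)))) :
    ‖exp (2 * Real.pi * I * z)‖ ≤ (scale b g D * n) ^ n :=
  calc ‖exp (2 * Real.pi * I * z)‖ ≤ Real.exp ‖2 * Real.pi * I * z‖ := norm_exp_le_exp_norm _
    _ = Real.exp (10 * Real.pi * (1 + house (b : K))) ^ n := by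
        rw [← Real.exp_nat_mul]
        simp only [norm_mul, hz, norm_I, norm_ofNat, norm_real, Real.norm_of_nonneg Real.pi_nonneg]
        ring_nf
    _ ≤ (scale b g D * n) ^ n := by
        gcongr
        exact (exp_le_scale b g D).trans (scale_le_scale_mul b g D hn)

theorem norm_auxFun_le (σ : K →+* ℂ) (hM : 1 ≤ M) (hn : M ^ 2 ≤ n)
    (hp : ∀ l, house (p l : K) ≤ (scale b g D * n) ^ (6 * (M * n)))
    {z : ℂ} (hz : ‖z‖ = 5 * (n * (1 + house (b : K)))) :
    ‖auxFun σ p z‖ ≤ (scale b g D * n) ^ (11 * (M * n)) := by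
  have hn1 : 1 ≤ n := (Nat.one_le_pow 2 M hM).trans hn
  set X := scale b g D * n with hXdef
  have hX : 1 ≤ X := one_le_scale_mul b g D hn1
  have hM3 : M ^ 3 ≤ M * n := pow_three_le_mul hn
  have hzX : ‖z‖ ≤ X := by
    rw [hz, hXdef, mul_left_comm, mul_comm]
    gcongr
    exact five_mul_one_add_house_le_scale b g D
  have hexp : ‖exp (2 * Real.pi * I * z)‖ ≤ X ^ n := norm_exp_le hn1 hz
  have hterm (l : Fin (2 * M ^ 3) × Fin M) :
      ‖σ (p l) * z ^ (l.1 : ℕ) * exp (2 * Real.pi * I * z) ^ (l.2 : ℕ)‖ ≤ X ^ (9 * (M * n)) :=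
    calc ‖σ (p l) * z ^ (l.1 : ℕ) * exp (2 * Real.pi * I * z) ^ (l.2 : ℕ)‖
        = ‖σ (p l)‖ * ‖z‖ ^ (l.1 : ℕ) * ‖exp (2 * Real.pi * I * z)‖ ^ (l.2 : ℕ) := by
          rw [norm_mul, norm_mul, norm_pow, norm_pow]
      _ ≤ X ^ (6 * (M * n)) * X ^ (l.1 : ℕ) * (X ^ n) ^ (l.2 : ℕ) := by
          gcongr
          exact (norm_embedding_le_house _ σ).trans (hp l)
      _ ≤ X ^ (6 * (M * n)) * X ^ (2 * M ^ 3) * (X ^ n) ^ M := by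
          gcongr
          · exact l.1.2.le
          · exact one_le_pow₀ hX
          · exact l.2.2.le
      _ = X ^ (6 * (M * n) + 2 * M ^ 3 + n * M) := by ring
      _ ≤ X ^ (9 * (M * n)) := pow_le_pow_right₀ hX (by linarith [mul_comm n M])
  exact (norm_sum_le _ _).trans (sum_le_scale_mul_pow hM hn hterm)

end Estimates

section Extrapolation

variable {σ : K →+* ℂ} {b g : 𝓞 K} {D M n : ℕ} {p : Fin (2 * M ^ 3) × Fin M → 𝓞 K}

theorem norm_auxFun_le_of_zeros
    (hinj : Function.Injective fun q : ℕ × ℕ => (q.1 : ℂ) + q.2 * σ b) (hM : 1 ≤ M)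
    (hn : M ^ 2 ≤ n) (hp : ∀ l, house (p l : K) ≤ (scale b g D * n) ^ (6 * (M * n)))
    (hzero : ∀ x < n, ∀ y < n, auxFun σ p (x + y * σ b) = 0) {w : ℂ}
    (hw : ‖w‖ ≤ n * (1 + house (b : K))) :
    ‖auxFun σ p w‖ ≤ (scale b g D * n) ^ (11 * (M * n)) * (1 / 2) ^ (n * n) := by
  let grid := (Finset.range n ×ˢ Finset.range n).image fun q : ℕ × ℕ => (q.1 : ℂ) + q.2 * σ b
  have hcard : grid.card = n * n := by
    rw [Finset.card_image_of_injective _ hinj, Finset.card_product, Finset.card_range]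
  have hgrid : ∀ a ∈ grid, ∃ x < n, ∃ y < n, (x : ℂ) + y * σ b = a := fun a ha => by
    obtain ⟨q, hq, rfl⟩ := Finset.mem_image.1 ha
    rw [Finset.mem_product, Finset.mem_range, Finset.mem_range] at hq
    exact ⟨q.1, hq.1, q.2, hq.2, rfl⟩
  have hn1 : 1 ≤ n := (Nat.one_le_pow 2 M hM).trans hn
  have hr : 0 < n * (1 + house (b : K)) := by
    have := house_nonneg (b : K)
    positivity
  rw [← hcard]
  refine norm_le_mul_half_pow_card_of_zeros (differentiable_auxFun σ p) (fun a ha => ?_) hr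
    (fun a ha => ?_) (fun z hz => norm_auxFun_le σ hM hn hp hz) hw
  · obtain ⟨x, hx, y, hy, rfl⟩ := hgrid a ha
    exact hzero x hx y hy
  · obtain ⟨x, hx, y, hy, rfl⟩ := hgrid a ha
    exact norm_add_mul_le σ hx.le hy.le

/-- A nonzero value at a further grid point would be an algebraic integer (up to a power of `D`)
with a conjugate too small for its house. -/
theorem auxFun_eq_zero_of_zeros (hg : σ g = D * exp (2 * Real.pi * I * σ b)) (hD : 1 ≤ D)
    (hinj : Function.Injective fun q : ℕ × ℕ => (q.1 : ℂ) + q.2 * σ b) (hM : 1 ≤ M)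
    (hn : M ^ 2 ≤ n) (hp : ∀ l, house (p l : K) ≤ (scale b g D * n) ^ (6 * (M * n)))
    (hsmall : (scale b g D * n) ^ ((12 + 11 * Module.finrank ℚ K) * (M * n)) < 2 ^ (n * n))
    (hzero : ∀ x < n, ∀ y < n, auxFun σ p (x + y * σ b) = 0) {x y : ℕ} (hx : x ≤ n)
    (hy : y ≤ n) : auxFun σ p (x + y * σ b) = 0 := by
  by_contra hne
  have hn1 : 1 ≤ n := (Nat.one_le_pow 2 M hM).trans hn
  set X := scale b g D * n
  set d := Module.finrank ℚ K
  have hX : 1 ≤ X := one_le_scale_mul b g D hn1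
  have hDX : (D : ℝ) ≤ X := (natCast_le_scale b g D).trans (scale_le_scale_mul b g D hn1)
  have hvalue := map_sum_evalCoeff_mul hg p x y
  have hhouse := house_sum_evalCoeff_mul_le hM hn hp hx hy
  set ξ := ∑ l, evalCoeff b g D x y l * p l
  have hξ : ξ ≠ 0 := fun h => by
    simp only [h, map_zero] at hvalue
    exact mul_ne_zero (pow_ne_zero _ (Nat.cast_ne_zero.2 (by omega))) hne hvalue.symm
  have hσξ : ‖σ ξ‖ ≤ X ^ (M * n) * (X ^ (11 * (M * n)) * (1 / 2) ^ (n * n)) := by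
    rw [hvalue, norm_mul, norm_pow, Complex.norm_natCast]
    refine mul_le_mul ?_ (norm_auxFun_le_of_zeros hinj hM hn hp hzero (norm_add_mul_le σ hx hy))
      (norm_nonneg _) (by positivity)
    calc (D : ℝ) ^ (M * y) ≤ X ^ (M * y) := by gcongr
      _ ≤ X ^ (M * n) := by gcongr
  have hlt : (1 : ℝ) < 1 :=
    calc 1 ≤ ‖σ ξ‖ * house (ξ : K) ^ (d - 1) := one_le_norm_mul_house_pow hξ σ
      _ ≤ X ^ (M * n) * (X ^ (11 * (M * n)) * (1 / 2) ^ (n * n)) * (X ^ (11 * (M * n))) ^ (d - 1) :=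
          mul_le_mul hσξ (pow_le_pow_left₀ (house_nonneg _) hhouse _)
            (pow_nonneg (house_nonneg _) _) (by positivity)
      _ ≤ X ^ (M * n) * (X ^ (11 * (M * n)) * (1 / 2) ^ (n * n)) * (X ^ (11 * (M * n))) ^ d := by
          gcongr
          · exact one_le_pow₀ hX
          · omega
      _ = X ^ ((12 + 11 * d) * (M * n)) * (1 / 2) ^ (n * n) := by
          rw [← pow_mul]
          ring
      _ < 2 ^ (n * n) * (1 / 2) ^ (n * n) := by gcongr
      _ = 1 := by rw [← mul_pow]; norm_num
  exact lt_irrefl _ hlt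

theorem auxFun_eq_zero_of_forall_zeros
    (hinj : Function.Injective fun q : ℕ × ℕ => (q.1 : ℂ) + q.2 * σ b) (hM : 1 ≤ M)
    (hp : ∀ n, M ^ 2 ≤ n → ∀ l, house (p l : K) ≤ (scale b g D * n) ^ (6 * (M * n)))
    (hsmall : ∀ n, M ^ 2 ≤ n → (scale b g D * n) ^ (12 * (M * n)) ≤ 2 ^ (n * n))
    (hzero : ∀ x y : ℕ, auxFun σ p (x + y * σ b) = 0) (w : ℂ) : auxFun σ p w = 0 := by
  rw [← norm_le_zero_iff]
  refine ge_of_tendsto tendsto_one_div_atTop_nhds_zero_nat ?_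
  filter_upwards [Filter.eventually_ge_atTop (M ^ 2), Filter.eventually_ge_atTop ⌈‖w‖⌉₊]
    with n hn hwn
  have hn1 : 1 ≤ n := (Nat.one_le_pow 2 M hM).trans hn
  have hw : ‖w‖ ≤ n * (1 + house (b : K)) :=
    (Nat.ceil_le.1 hwn).trans (le_mul_of_one_le_right n.cast_nonneg
      (by linarith [house_nonneg (b : K)]))
  have hbound := norm_auxFun_le_of_zeros hinj hM hn (hp n hn) (fun x _ y _ => hzero x y) hw
  have hsmall' := hsmall n hn
  have hnX : (n : ℝ) ≤ scale b g D * n :=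
    le_mul_of_one_le_left n.cast_nonneg (by linarith [five_le_scale b g D])
  have hX := one_le_scale_mul b g D hn1
  set X := scale b g D * n
  refine hbound.trans ?_
  rw [one_div_pow, mul_one_div, div_le_div_iff₀ (by positivity) (by positivity), one_mul]
  calc X ^ (11 * (M * n)) * n ≤ X ^ (11 * (M * n)) * X := by gcongr
    _ = X ^ (11 * (M * n) + 1) := (pow_succ _ _).symm
    _ ≤ X ^ (12 * (M * n)) := pow_le_pow_right₀ hX (by linarith [Nat.mul_pos hM hn1])
    _ ≤ 2 ^ (n * n) := hsmall'

theorem not_injective_grid (hg : σ g = D * exp (2 * Real.pi * I * σ b)) (hD : 1 ≤ D) :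
    ¬ Function.Injective fun q : ℕ × ℕ => (q.1 : ℂ) + q.2 * σ b := fun hinj => by
  have hΘ : 1 ≤ scale b g D := by linarith [five_le_scale b g D]
  obtain ⟨M, ⟨p, hp0, hvanish, hp⟩, hM, hasymp⟩ :=
    ((eventually_exists_auxFun_vanishing b g D).and ((Filter.eventually_ge_atTop 1).and
      (Filter.eventually_forall_ge_atTop.2
        (eventually_mul_pow_lt_two_pow hΘ (12 + 11 * Module.finrank ℚ K))))).exists
  have hsmall := fun n (hn : M ^ 2 ≤ n) =>
    hasymp n ((Nat.le_self_pow two_ne_zero M).trans hn) M hn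
  have hgrid : ∀ n, M ^ 2 ≤ n → ∀ x < n, ∀ y < n, auxFun σ p (x + y * σ b) = 0 := fun n hn => by
    induction n, hn using Nat.le_induction with
    | base =>
      intro x hx y hy
      have hvalue := map_sum_evalCoeff_mul hg p x y
      simp only [hvanish x hx y hy, map_zero] at hvalue
      exact (mul_eq_zero.1 hvalue.symm).resolve_left (pow_ne_zero _ (Nat.cast_ne_zero.2 (by omega)))
    | succ n hn ih =>
      intro x hx y hy
      exact auxFun_eq_zero_of_zeros hg hD hinj hM hn (hp n hn) (hsmall n hn) ih
        (Nat.lt_succ_iff.1 hx) (Nat.lt_succ_iff.1 hy)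
  have hzero : ∀ x y : ℕ, auxFun σ p (x + y * σ b) = 0 := fun x y =>
    hgrid (M ^ 2 + x + y + 1) (by omega) x (by omega) y (by omega)
  refine hp0 (eq_zero_of_auxFun_eq_zero (auxFun_eq_zero_of_forall_zeros hinj hM hp
    (fun n hn => ((pow_le_pow_right₀ ?_ ?_).trans_lt (hsmall n hn)).le) hzero))
  · exact one_le_scale_mul b g D ((Nat.one_le_pow 2 M hM).trans hn)
  · exact Nat.mul_le_mul_right _ (Nat.le_add_right _ _)

end Extrapolation

theorem exists_nat_mul_isIntegral {x : ℂ} (hx : IsAlgebraic ℚ x) :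
    ∃ D : ℕ, 0 < D ∧ IsIntegral ℤ ((D : ℂ) * x) := by
  obtain ⟨m, hm, hmx⟩ :=
    ((IsFractionRing.isAlgebraic_iff ℤ ℚ ℂ).2 hx).exists_integral_multiple
  refine ⟨m.natAbs, Int.natAbs_pos.2 hm, ?_⟩
  rw [zsmul_eq_mul] at hmx
  obtain h | h := Int.natAbs_eq m
  · rwa [h, Int.cast_natCast] at hmx
  · rw [h, Int.cast_neg, Int.cast_natCast, neg_mul] at hmx
    exact IsIntegral.of_neg hmx

theorem exists_rat_eq_of_not_injective_grid {β : ℂ}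
    (h : ¬ Function.Injective fun q : ℕ × ℕ => (q.1 : ℂ) + q.2 * β) : ∃ q : ℚ, β = q := by
  simp only [Function.Injective, Prod.forall, Prod.mk.injEq, not_forall] at h
  obtain ⟨x, y, x', y', heq, hne⟩ := h
  have hy : (y : ℂ) - y' ≠ 0 := fun h => by
    have hyy : (y : ℂ) = y' := sub_eq_zero.1 h
    rw [hyy, add_left_inj] at heq
    exact hne ⟨by exact_mod_cast heq, by exact_mod_cast hyy⟩
  refine ⟨((x' : ℚ) - x) / (y - y'), ?_⟩
  push_cast
  rw [eq_div_iff hy]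
  linear_combination heq

theorem exists_rat_eq_of_isIntegral {β : ℂ} (hβ : IsIntegral ℤ β)
    (hexp : IsAlgebraic ℚ (exp (2 * Real.pi * I * β))) : ∃ q : ℚ, β = q := by
  obtain ⟨D, hD, hDγ⟩ := exists_nat_mul_isIntegral hexp
  set γ := exp (2 * Real.pi * I * β)
  let K := IntermediateField.adjoin ℚ ({β, γ} : Set ℂ)
  have hfin : FiniteDimensional ℚ K := IntermediateField.finiteDimensional_adjoin <| by
    rintro x (rfl | rfl)
    · exact hβ.tower_top
    · exact hexp.isIntegral
  have : NumberField K := { to_charZero := inferInstance, to_finiteDimensional := hfin }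
  have hint : ∀ x : K, IsIntegral ℤ (x : ℂ) → IsIntegral ℤ x := fun x =>
    (isIntegral_algHom_iff (algebraMap K ℂ).toIntAlgHom (algebraMap K ℂ).injective).1
  let βK : K := ⟨β, IntermediateField.subset_adjoin _ _ (by simp)⟩
  let γK : K := ⟨γ, IntermediateField.subset_adjoin _ _ (by simp)⟩
  let b : 𝓞 K := ⟨βK, hint _ hβ⟩
  let g : 𝓞 K := ⟨D * γK, hint _ (by push_cast; exact hDγ)⟩
  have hg : algebraMap K ℂ g = D * exp (2 * Real.pi * I * algebraMap K ℂ b) := by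
    change ((D * γK : K) : ℂ) = D * γ
    push_cast
    rfl
  exact exists_rat_eq_of_not_injective_grid (not_injective_grid hg hD)

end GelfondSchneider

open GelfondSchneider in
/-- The Gelfond–Schneider theorem for the logarithm `2πi` of `1`. -/
theorem exists_rat_eq_of_isAlgebraic_exp {β : ℂ} (hβ : IsAlgebraic ℚ β)
    (hexp : IsAlgebraic ℚ (Complex.exp (2 * Real.pi * Complex.I * β))) : ∃ q : ℚ, β = q := by
  obtain ⟨D, hD, hDβ⟩ := exists_nat_mul_isIntegral hβ
  have hexpD : Complex.exp (2 * Real.pi * Complex.I * (D * β)) =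
      Complex.exp (2 * Real.pi * Complex.I * β) ^ D := by
    rw [← Complex.exp_nat_mul, mul_left_comm]
  obtain ⟨q, hq⟩ := exists_rat_eq_of_isIntegral hDβ (hexpD ▸ hexp.pow D)
  refine ⟨q / D, ?_⟩
  push_cast
  rw [eq_div_iff (Nat.cast_ne_zero.2 hD.ne'), mul_comm, hq]

/-! ### Elements with constant logarithmic derivative -/

section ConstantLogDeriv

variable {k K : Type*} [Field k] [Field K] [Algebra k K] {δ : Derivation k K K} {u r : K} {c : k}

open Polynomial IntermediateField

theorem transcendental_of_derivation_eq_one [CharZero k] (hu : δ u = 1) : Transcendental k u := by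
  intro halg
  have hderiv := congrArg δ (minpoly.aeval k u)
  rw [Derivation.map_aeval, hu, map_zero, smul_eq_mul, mul_one] at hderiv
  exact (minpoly.irreducible halg.isIntegral).separable.aeval_derivative_ne_zero
    (minpoly.aeval k u) hderiv

theorem derivation_ne_smul_of_mem_adjoin_simple [CharZero k] (hu : δ u = 1) (hc : c ≠ 0) {s : K}
    (hs : s ∈ k⟮u⟯) (hs0 : s ≠ 0) : δ s ≠ c • s := by
  obtain ⟨P, Q, rfl⟩ := (mem_adjoin_simple_iff k s).1 hs
  obtain ⟨hPu, hQu⟩ := div_ne_zero_iff.1 hs0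
  have hP : P ≠ 0 := by rintro rfl; simp at hPu
  have hQ : Q ≠ 0 := by rintro rfl; simp at hQu
  intro h
  have hpoly : Q * derivative P - P * derivative Q = Polynomial.C c * (P * Q) := by
    apply transcendental_iff_injective.1 (transcendental_of_derivation_eq_one hu)
    rw [Derivation.leibniz_div, Derivation.map_aeval, Derivation.map_aeval, hu] at h
    simp only [smul_eq_mul, mul_one, Algebra.smul_def] at h
    simp only [map_sub, map_mul, Polynomial.aeval_C]
    field_simp at h
    linear_combination h
  have hdeg : (Q * derivative P - P * derivative Q).degree < (Polynomial.C c * (P * Q)).degree := by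
    rw [degree_C_mul hc, degree_mul]
    refine (degree_sub_le _ _).trans_lt (max_lt ?_ ?_)
    · rw [degree_mul, add_comm]
      exact WithBot.add_lt_add_right (degree_ne_bot.2 hQ) (degree_derivative_lt hP)
    · rw [degree_mul]
      exact WithBot.add_lt_add_left (degree_ne_bot.2 hP) (degree_derivative_lt hQ)
  exact hdeg.ne (congrArg degree hpoly)

/-- The constant coefficient `s` of the minimal polynomial of `r` works: differentiating the minimal
relation and subtracting a multiple of it leaves a relation of smaller degree, which is trivial. -/
theorem exists_derivation_eq_nsmul_of_isAlgebraic {F : IntermediateField k K}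
    (hF : ∀ x ∈ F, δ x ∈ F) (halg : IsAlgebraic F r) (hr0 : r ≠ 0) (hr : δ r = c • r) :
    ∃ s ∈ F, s ≠ 0 ∧ ∃ m : ℕ, 0 < m ∧ δ s = (m * c) • s := by
  set p := minpoly F r
  have hmonic : p.Monic := minpoly.monic halg.isIntegral
  let e : ℕ → F := fun i => ⟨δ (p.coeff i), hF _ (p.coeff i).2⟩
    + ((i : k) * c) • p.coeff i - ((p.natDegree : k) * c) • p.coeff i
  have he (i : ℕ) : (e i : K) = δ (p.coeff i)
    + ((i : k) * c) • (p.coeff i : K) - ((p.natDegree : k) * c) • (p.coeff i : K) := rfl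
  have hδ (i : ℕ) : e i • r ^ i
      = δ (p.coeff i • r ^ i) - (p.natDegree * c) • (p.coeff i • r ^ i) := by
    have hpow : (i : K) * (r ^ (i - 1) * r) = i * r ^ i := by cases i <;> simp [pow_succ]
    simp only [IntermediateField.smul_def, he, smul_eq_mul, Derivation.leibniz,
      Derivation.leibniz_pow, hr, nsmul_eq_mul]
    simp only [Algebra.smul_def, map_mul, map_natCast]
    linear_combination -(p.coeff i : K) * algebraMap k K c * hpow
  have he_top : e p.natDegree = 0 := by
    simp only [e, hmonic.coeff_natDegree, IntermediateField.coe_one, Derivation.map_one_eq_zero,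
      add_sub_cancel_right]
    rfl
  have hsum : ∑ i : Fin p.natDegree, e i • r ^ (i : ℕ) = 0 := by
    have hrel : ∑ i ∈ Finset.range (p.natDegree + 1), p.coeff i • r ^ i = 0 := by
      rw [← aeval_eq_sum_range, minpoly.aeval]
    have hrange : ∑ i ∈ Finset.range (p.natDegree + 1), e i • r ^ i = 0 := by
      simp only [hδ, Finset.sum_sub_distrib, ← map_sum, ← Finset.smul_sum, hrel, map_zero,
        smul_zero, sub_zero]
    rwa [Finset.sum_range_succ, he_top, zero_smul, add_zero, Finset.sum_range] at hrange
  have hdeg : 0 < p.natDegree := minpoly.natDegree_pos halg.isIntegral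
  have he_zero : (e 0 : K) = 0 := by
    rw [Fintype.linearIndependent_iff.1 (linearIndependent_pow r) (fun i => e i) hsum ⟨0, hdeg⟩,
      IntermediateField.coe_zero]
  refine ⟨p.coeff 0, (p.coeff 0).2, ?_, p.natDegree, hdeg, ?_⟩
  · exact_mod_cast minpoly.coeff_zero_ne_zero halg.isIntegral hr0
  · rwa [he, Nat.cast_zero, zero_mul, zero_smul, add_zero, sub_eq_zero] at he_zero

theorem derivation_mem_adjoin_simple (hu : δ u = 1) {x : K} (hx : x ∈ k⟮u⟯) : δ x ∈ k⟮u⟯ := by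
  obtain ⟨P, Q, rfl⟩ := (mem_adjoin_simple_iff k x).1 hx
  have hmem (R : k[X]) : aeval u R ∈ k⟮u⟯ :=
    (mem_adjoin_simple_iff k _).2 ⟨R, 1, by rw [map_one, div_one]⟩
  rw [Derivation.leibniz_div, Derivation.map_aeval, Derivation.map_aeval, hu]
  simp only [smul_eq_mul, mul_one]
  exact mul_mem (pow_mem (inv_mem (hmem Q)) 2)
    (sub_mem (mul_mem (hmem Q) (hmem _)) (mul_mem (hmem P) (hmem _)))

theorem transcendental_adjoin_simple_of_derivation_eq_smul [CharZero k] (hu : δ u = 1) (hc : c ≠ 0)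
    (hr0 : r ≠ 0) (hr : δ r = c • r) : Transcendental k⟮u⟯ r := by
  intro halg
  obtain ⟨s, hs, hs0, m, hm, hδs⟩ := exists_derivation_eq_nsmul_of_isAlgebraic
    (fun _ hx => derivation_mem_adjoin_simple hu hx) halg hr0 hr
  exact derivation_ne_smul_of_mem_adjoin_simple hu
    (mul_ne_zero (Nat.cast_ne_zero.2 hm.ne') hc) hs hs0 hδs

end ConstantLogDeriv

/-! ### Derivations of the function field of a hypersurface -/

section Derivations

variable {k K : Type*} [Field k] [Field K] [Algebra k K]

/-- The subfield of constants of a derivation. -/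
def constantField (δ : Derivation k K K) : IntermediateField k K where
  carrier := {x | δ x = 0}
  mul_mem' {a b} (ha : δ a = 0) (hb : δ b = 0) := by simp [ha, hb]
  add_mem' {a b} (ha : δ a = 0) (hb : δ b = 0) := by simp [ha, hb]
  algebraMap_mem' := δ.map_algebraMap
  inv_mem' a (ha : δ a = 0) := by simp [Derivation.leibniz_inv, ha]

/-- A derivation, viewed as linear over its field of constants. -/
def derivationOverConstants (δ : Derivation k K K) : Derivation (constantField δ) K K :=
  Derivation.mk'
    { toFun := δ
      map_add' := δ.map_add
      map_smul' c x := by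
        have hc : δ (c : K) = 0 := c.2
        simp [IntermediateField.smul_def, hc] }
    δ.leibniz

@[simp]
theorem derivationOverConstants_apply (δ : Derivation k K K) (x : K) :
    derivationOverConstants δ x = δ x := rfl

end Derivations

theorem exists_derivation_extension {R A B M : Type*} [CommRing R] [CommRing A] [CommRing B]
    [Algebra R A] [Algebra R B] [Algebra A B] [IsScalarTower R A B] [Algebra.FormallyEtale A B]
    [AddCommGroup M] [Module R M] [Module A M] [Module B M] [IsScalarTower R A M]
    [IsScalarTower R B M] [IsScalarTower A B M] (D : Derivation R A M) :
    ∃ δ : Derivation R B M, ∀ a, δ (algebraMap A B a) = D a := by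
  refine ⟨(D.liftKaehlerDifferential.liftBaseChange B ∘ₗ
    (KaehlerDifferential.tensorKaehlerEquivOfFormallyEtale R A B).symm.toLinearMap).compDer
    (KaehlerDifferential.D R B), fun a => ?_⟩
  simp [KaehlerDifferential.tensorKaehlerEquivOfFormallyEtale_symm_D_algebraMap]

theorem isAlgebraic_of_kaehlerDifferential_D_eq_zero {F K : Type*} [Field F] [Field K] [Algebra F K]
    [Algebra.EssFiniteType F K] (h : KaehlerDifferential.D F K = 0) : Algebra.IsAlgebraic F K := by
  have : Subsingleton (Ω[K⁄F]) := by
    rw [← Submodule.subsingleton_iff K, ← subsingleton_iff_bot_eq_top,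
      ← KaehlerDifferential.span_range_derivation, h]
    simp
  have : Algebra.FormallyUnramified F K := ⟨this⟩
  have := Algebra.FormallyUnramified.isSeparable F K
  infer_instance

theorem derivation_map_mvPolynomial {σ k R A M : Type*} [Fintype σ] [CommSemiring k]
    [CommSemiring R] [CommSemiring A] [Algebra R A] [AddCommMonoid M] [Module R M] [Module A M]
    (E : Derivation R A M) (φ : MvPolynomial σ k →+* A) (hC : ∀ c, E (φ (C c)) = 0)
    (p : MvPolynomial σ k) : E (φ p) = ∑ l, φ (pderiv l p) • E (φ (X l)) := by
  classical
  induction p using MvPolynomial.induction_on with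
  | C c => simp [hC]
  | add p q hp hq => simp [hp, hq, add_smul, Finset.sum_add_distrib]
  | mul_X p l hp =>
    simp only [map_mul, Derivation.leibniz, hp, smul_eq_mul, pderiv_X, map_add, add_smul,
      Finset.sum_add_distrib, mul_smul, Finset.smul_sum]
    congr 1
    simp [Pi.single_apply, apply_ite]

section FunctionField

variable {σ k : Type*} [Field k]

/-- The derivation of the polynomial ring along the vector field `∂ⱼf ∂ᵢ - ∂ᵢf ∂ⱼ`, which is tangent
to the hypersurface `f = 0`. -/
def tangential (f : MvPolynomial σ k) (i j : σ) :
    Derivation k (MvPolynomial σ k) (MvPolynomial σ k) :=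
  pderiv j f • pderiv i - pderiv i f • pderiv j

theorem tangential_apply (f : MvPolynomial σ k) (i j : σ) (p : MvPolynomial σ k) :
    tangential f i j p = pderiv j f * pderiv i p - pderiv i f * pderiv j p := rfl

theorem tangential_self (f : MvPolynomial σ k) (i j : σ) : tangential f i j f = 0 := by
  rw [tangential_apply, mul_comm, sub_self]

/-- The linear form with coefficient vector `u`. -/
def linForm [Fintype σ] (u : σ → k) : MvPolynomial σ k := ∑ l, C (u l) * X l

theorem pderiv_linForm [Fintype σ] (u : σ → k) (i : σ) : pderiv i (linForm u) = C (u i) := by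
  classical
  simp [linForm, pderiv_X, Pi.single_apply]

theorem linForm_sub [Fintype σ] (u v : σ → k) : linForm (u - v) = linForm u - linForm v := by
  simp [linForm, sub_mul]

/-- The function field of the hypersurface `f = 0`. -/
abbrev HypersurfaceField (f : MvPolynomial σ k) : Type _ :=
  FractionRing (MvPolynomial σ k ⧸ Ideal.span {f})

/-- The class of a polynomial in the function field of `f = 0`. -/
def toHypersurfaceField (f : MvPolynomial σ k) : MvPolynomial σ k →ₐ[k] HypersurfaceField f :=
  IsScalarTower.toAlgHom k (MvPolynomial σ k) (HypersurfaceField f)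

variable {f : MvPolynomial σ k}

theorem toHypersurfaceField_eq_zero_iff {p : MvPolynomial σ k} :
    toHypersurfaceField f p = 0 ↔ f ∣ p := by
  rw [toHypersurfaceField, IsScalarTower.toAlgHom_apply,
    IsScalarTower.algebraMap_apply _ (MvPolynomial σ k ⧸ Ideal.span {f}),
    map_eq_zero_iff _ (IsFractionRing.injective _ _), Ideal.Quotient.algebraMap_eq,
    Ideal.Quotient.eq_zero_iff_mem, Ideal.mem_span_singleton]

theorem exists_derivation_hypersurfaceField {D : Derivation k (MvPolynomial σ k) (MvPolynomial σ k)}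
    (hD : D f = 0) : ∃ δ : Derivation k (HypersurfaceField f) (HypersurfaceField f),
      ∀ p, δ (toHypersurfaceField f p) = toHypersurfaceField f (D p) := by
  have hker (p) (hp : Ideal.Quotient.mkₐ k (Ideal.span {f}) p = 0) :
      Ideal.Quotient.mkₐ k (Ideal.span {f}) (D p) = 0 := by
    rw [Ideal.Quotient.mkₐ_eq_mk, Ideal.Quotient.eq_zero_iff_mem, Ideal.mem_span_singleton] at hp ⊢
    obtain ⟨q, rfl⟩ := hp
    simp [hD]
  let D₁ := Derivation.liftOfSurjective (Ideal.Quotient.mkₐ_surjective k (Ideal.span {f})) hker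
  have : Algebra.FormallyEtale (MvPolynomial σ k ⧸ Ideal.span {f}) (HypersurfaceField f) :=
    Algebra.FormallyEtale.of_isLocalization (nonZeroDivisors _)
  obtain ⟨δ, hδ⟩ := exists_derivation_extension (B := HypersurfaceField f)
    ((Algebra.linearMap (MvPolynomial σ k ⧸ Ideal.span {f}) (HypersurfaceField f)).compDer D₁)
  refine ⟨δ, fun p => (hδ _).trans ?_⟩
  exact congrArg (algebraMap _ (HypersurfaceField f)) (Derivation.liftOfSurjective_apply _ hker p)

theorem exists_eq_toHypersurfaceField_div [(Ideal.span {f}).IsPrime] (x : HypersurfaceField f) :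
    ∃ a b, x = toHypersurfaceField f a / toHypersurfaceField f b := by
  obtain ⟨a, b, -, rfl⟩ := IsFractionRing.div_surjective (A := MvPolynomial σ k ⧸ Ideal.span {f}) x
  obtain ⟨a, rfl⟩ := Ideal.Quotient.mk_surjective a
  obtain ⟨b, rfl⟩ := Ideal.Quotient.mk_surjective b
  exact ⟨a, b, rfl⟩

variable [Fintype σ]

/-- A derivation over the field generated by the constants of `δ` and the linear form kills all
coordinates: those of `Xᵢ` and `Xⱼ` satisfy two linear relations with determinant
`φ (tangential f i j (linForm u))`. -/
theorem isAlgebraic_adjoin_linForm {K : Type*} [Field K] [Algebra k K] [Algebra.EssFiniteType k K]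
    {φ : MvPolynomial σ k →ₐ[k] K} (hφ : ∀ x, ∃ a b, x = φ a / φ b) (hf : φ f = 0)
    {i j : σ} {u : σ → k} (hw : φ (tangential f i j (linForm u)) ≠ 0)
    {δ : Derivation k K K} (hδ : ∀ l, l ≠ i → l ≠ j → δ (φ (X l)) = 0) :
    Algebra.IsAlgebraic (IntermediateField.adjoin (constantField δ) {φ (linForm u)}) K := by
  set F := IntermediateField.adjoin (constantField δ) {φ (linForm u)}
  have : Algebra.EssFiniteType (constantField δ) K := .of_comp k _ _
  have : Algebra.EssFiniteType F K := .of_comp (constantField δ) _ _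
  apply isAlgebraic_of_kaehlerDifferential_D_eq_zero
  set E := KaehlerDifferential.D F K
  have hconst {x : K} (hx : x ∈ constantField δ) : E x = 0 :=
    E.map_algebraMap (algebraMap (constantField δ) F ⟨x, hx⟩)
  have hij : i ≠ j := by
    rintro rfl
    exact hw (by simp [tangential])
  have hE (p : MvPolynomial σ k) :
      E (φ p) = φ (pderiv i p) • E (φ (X i)) + φ (pderiv j p) • E (φ (X j)) := by
    have hC (c : k) : E (φ (C c)) = 0 := hconst (by simp)
    refine (derivation_map_mvPolynomial E φ.toRingHom hC p).trans ?_
    refine Fintype.sum_eq_add i j hij fun l hl => ?_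
    simp [hconst (hδ l hl.1 hl.2)]
  have hlin : φ (C (u i)) • E (φ (X i)) + φ (C (u j)) • E (φ (X j)) = 0 := by
    rw [← pderiv_linForm u i, ← pderiv_linForm u j, ← hE]
    exact E.map_algebraMap ⟨_, IntermediateField.mem_adjoin_simple_self _ _⟩
  have htan : φ (pderiv i f) • E (φ (X i)) + φ (pderiv j f) • E (φ (X j)) = 0 := by
    rw [← hE, hf, map_zero]
  have hdet : φ (tangential f i j (linForm u))
      = φ (pderiv j f) * φ (C (u i)) - φ (pderiv i f) * φ (C (u j)) := by
    rw [tangential_apply, pderiv_linForm, pderiv_linForm, map_sub, map_mul, map_mul]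
  have hXi : E (φ (X i)) = 0 := by
    refine (smul_eq_zero_iff_right hw).1 ?_
    rw [hdet]
    linear_combination (norm := module) φ (pderiv j f) • hlin - φ (C (u j)) • htan
  have hXj : E (φ (X j)) = 0 := by
    refine (smul_eq_zero_iff_right hw).1 ?_
    rw [hdet]
    linear_combination (norm := module) φ (C (u i)) • htan - φ (pderiv i f) • hlin
  have hE_zero (p : MvPolynomial σ k) : E (φ p) = 0 := by
    rw [hE, hXi, hXj, smul_zero, smul_zero, add_zero]
  ext x
  obtain ⟨a, b, rfl⟩ := hφ x
  simp [Derivation.leibniz_div, hE_zero]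

theorem map_tangential_linForm_eq_zero [CharZero k] {K : Type*} [Field K] [Algebra k K]
    [Algebra.EssFiniteType k K] {φ : MvPolynomial σ k →ₐ[k] K} (hφ : ∀ x, ∃ a b, x = φ a / φ b)
    (hf : φ f = 0) {i j : σ} {δ : Derivation k K K} (hδ : ∀ p, δ (φ p) = φ (tangential f i j p))
    {a b : MvPolynomial σ k} (ha : φ a ≠ 0) (hb : φ b ≠ 0) {u : σ → k}
    (h : φ (a * tangential f i j b - b * tangential f i j a
      + a * b * tangential f i j (linForm u)) = 0) : φ (tangential f i j (linForm u)) = 0 := by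
  by_contra hw
  let δ₁ := (φ (tangential f i j (linForm u)))⁻¹ • δ
  have hδ₁ (p) : δ₁ (φ p) = (φ (tangential f i j (linForm u)))⁻¹ * φ (tangential f i j p) :=
    congrArg (_ * ·) (hδ p)
  have hX (l : σ) (hi : l ≠ i) (hj : l ≠ j) : δ₁ (φ (X l)) = 0 := by
    simp [hδ₁, tangential_apply, pderiv_X_of_ne hi, pderiv_X_of_ne hj]
  have halg := isAlgebraic_adjoin_linForm hφ hf hw hX
  refine transcendental_adjoin_simple_of_derivation_eq_smul (δ := derivationOverConstants δ₁)
    (c := -1) (r := φ b / φ a) ?_ (neg_ne_zero.2 one_ne_zero) (div_ne_zero hb ha) ?_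
    (halg.isAlgebraic _)
  · rw [derivationOverConstants_apply, hδ₁, inv_mul_cancel₀ hw]
  · rw [derivationOverConstants_apply, Derivation.leibniz_div, hδ₁, hδ₁]
    simp only [map_add, map_sub, map_mul] at h
    simp only [smul_eq_mul, neg_smul, one_smul]
    field_simp
    linear_combination h

theorem dvd_tangential_linForm [CharZero k] (hf : Prime f) {a b : MvPolynomial σ k} (ha : ¬ f ∣ a)
    (hb : ¬ f ∣ b) {i j : σ} {u : σ → k}
    (h : f ∣ a * tangential f i j b - b * tangential f i j a
      + a * b * tangential f i j (linForm u)) : f ∣ tangential f i j (linForm u) := by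
  have : (Ideal.span {f}).IsPrime := (Ideal.span_singleton_prime hf.ne_zero).2 hf
  obtain ⟨δ, hδ⟩ := exists_derivation_hypersurfaceField (tangential_self f i j)
  exact toHypersurfaceField_eq_zero_iff.1 <|
    map_tangential_linForm_eq_zero (φ := toHypersurfaceField f) exists_eq_toHypersurfaceField_div
      (toHypersurfaceField_eq_zero_iff.2 dvd_rfl) hδ (toHypersurfaceField_eq_zero_iff.not.2 ha)
      (toHypersurfaceField_eq_zero_iff.not.2 hb) (toHypersurfaceField_eq_zero_iff.2 h)

end FunctionField

/-! ### Tangential derivatives of relations on a hypersurface -/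

theorem eq_zero_of_constant_on_fiber {𝕜 E F G : Type*} [NontriviallyNormedField 𝕜]
    [CompleteSpace 𝕜] [NormedAddCommGroup E] [NormedSpace 𝕜 E] [CompleteSpace E]
    [NormedAddCommGroup F] [NormedSpace 𝕜 F] [FiniteDimensional 𝕜 F] [NormedAddCommGroup G]
    [NormedSpace 𝕜 G] {f : E → F} {f' : E →L[𝕜] F} {g : E → G} {g' : E →L[𝕜] G} {a v : E}
    (hf : HasStrictFDerivAt f f' a) (hf' : f'.range = ⊤) (hg : HasFDerivAt g g' a)
    (hconst : ∀ x, f x = f a → g x = g a) (hv : f' v = 0) : g' v = 0 := by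
  set γ := hf.implicitFunction f f' hf' (f a)
  have hγ : HasFDerivAt γ f'.ker.subtypeL 0 := (hf.to_implicitFunction hf').hasFDerivAt
  have hγ_zero : γ 0 = a := hf.implicitFunction_apply_image hf'
  have hγ_fiber : ∀ᶠ y in nhds 0, f (γ y) = f a :=
    (hf.map_implicitFunction_eq hf').curry_nhds.self_of_nhds
  have hcomp : HasFDerivAt (g ∘ γ) (g'.comp f'.ker.subtypeL) 0 :=
    (hγ_zero.symm ▸ hg).comp 0 hγ
  have hcomp_const : HasFDerivAt (g ∘ γ) (0 : f'.ker →L[𝕜] G) 0 :=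
    (hasFDerivAt_const (g a) 0).congr_of_eventuallyEq (hγ_fiber.mono fun y hy => hconst _ hy)
  exact DFunLike.congr_fun (hcomp.unique hcomp_const) ⟨v, hv⟩

section Tangential

variable {σ 𝕜 : Type*} [Fintype σ] [NontriviallyNormedField 𝕜]

/-- The derivative at `z` of the function defined by the polynomial `p`. -/
def evalFDeriv (z : σ → 𝕜) (p : MvPolynomial σ 𝕜) : (σ → 𝕜) →L[𝕜] 𝕜 :=
  ∑ l, eval z (pderiv l p) • ContinuousLinearMap.proj l

theorem evalFDeriv_apply (z v : σ → 𝕜) (p : MvPolynomial σ 𝕜) :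
    evalFDeriv z p v = ∑ l, eval z (pderiv l p) * v l := by
  simp [evalFDeriv]

theorem hasStrictFDerivAt_eval (p : MvPolynomial σ 𝕜) (z : σ → 𝕜) :
    HasStrictFDerivAt (fun x => eval x p) (evalFDeriv z p) z := by
  classical
  induction p using MvPolynomial.induction_on with
  | C c =>
    have hderiv : evalFDeriv z (C c) = 0 := by ext; simp [evalFDeriv_apply]
    simpa only [eval_C, hderiv] using hasStrictFDerivAt_const c z
  | add p q hp hq =>
    have hderiv : evalFDeriv z (p + q) = evalFDeriv z p + evalFDeriv z q := by
      ext; simp [evalFDeriv_apply, add_mul, Finset.sum_add_distrib]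
    simpa only [map_add, hderiv] using hp.fun_add hq
  | mul_X p l hp =>
    have hderiv : evalFDeriv z (p * X l)
        = eval z p • ContinuousLinearMap.proj l + z l • evalFDeriv z p := by
      ext
      simp [evalFDeriv_apply, pderiv_X, Pi.single_apply, add_mul, Finset.sum_add_distrib,
        Finset.mul_sum, mul_assoc, apply_ite (eval z)]
    simpa only [map_mul, eval_X, hderiv] using hp.fun_mul (hasStrictFDerivAt_apply l z)

theorem evalFDeriv_tangent [DecidableEq σ] (f p : MvPolynomial σ 𝕜) (z : σ → 𝕜) (i j : σ) :
    evalFDeriv z p (Pi.single i (eval z (pderiv j f)) - Pi.single j (eval z (pderiv i f)))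
      = eval z (tangential f i j p) := by
  simp [evalFDeriv_apply, tangential_apply, Pi.single_apply, mul_comm, mul_sub]

theorem sum_tangential_mul_exp_eq_zero {σ ι : Type*} [Finite σ] {f : MvPolynomial σ ℂ}
    {M : Finset ι} {c q : ι → MvPolynomial σ ℂ}
    (hvan : ∀ z, eval z f = 0 → ∑ m ∈ M, eval z (c m) * Complex.exp (eval z (q m)) = 0)
    {z : σ → ℂ} (hz : eval z f = 0) (i j : σ) :
    ∑ m ∈ M, eval z (tangential f i j (c m) + c m * tangential f i j (q m))
      * Complex.exp (eval z (q m)) = 0 := by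
  classical
  have := Fintype.ofFinite σ
  set v : σ → ℂ := Pi.single i (eval z (pderiv j f)) - Pi.single j (eval z (pderiv i f)) with hv
  have hsum := HasStrictFDerivAt.fun_sum (u := M) fun m _ =>
    (hasStrictFDerivAt_eval (c m) z).fun_mul (hasStrictFDerivAt_eval (q m) z).cexp
  have hsum_v : (∑ m ∈ M, (eval z (c m) • Complex.exp (eval z (q m)) • evalFDeriv z (q m)
      + Complex.exp (eval z (q m)) • evalFDeriv z (c m))) v = 0 := by
    by_cases hL : evalFDeriv z f = 0
    · have hpderiv (l : σ) : eval z (pderiv l f) = 0 := by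
        simpa [evalFDeriv_apply, Pi.single_apply] using DFunLike.congr_fun hL (Pi.single l 1)
      rw [hv, hpderiv, hpderiv, Pi.single_zero, Pi.single_zero, sub_zero, map_zero]
    · have hsurj : (evalFDeriv z f).range = ⊤ :=
        LinearMap.range_eq_top.2 (LinearMap.surjective (by exact_mod_cast hL))
      refine eq_zero_of_constant_on_fiber (hasStrictFDerivAt_eval f z) hsurj hsum.hasFDerivAt
        (fun x hx => ?_) ?_
      · rw [hvan x (hx.trans hz), hvan z hz]
      · rw [evalFDeriv_tangent, tangential_self, map_zero]
  rw [← hsum_v, sum_apply]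
  refine Finset.sum_congr rfl fun m _ => ?_
  simp only [add_apply, smul_apply, v, evalFDeriv_tangent, smul_eq_mul, map_add, map_mul]
  ring

end Tangential

/-! ### Exponential relations on a hypersurface -/

section Nullstellensatz

variable {σ k : Type*} [Finite σ] [Field k] [IsAlgClosed k] {f g p : MvPolynomial σ k}

theorem dvd_of_eval_eq_zero (hf : Prime f) (h : ∀ z, eval z f = 0 → eval z p = 0) : f ∣ p := by
  have : (Ideal.span {f}).IsPrime := (Ideal.span_singleton_prime hf.ne_zero).2 hf
  rw [← Ideal.mem_span_singleton, ← IsPrime.vanishingIdeal_zeroLocus (K := k) (Ideal.span {f}),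
    zeroLocus_span]
  simpa [coe_aeval_eq_eval] using h

theorem dvd_of_eval_mul_eq_zero (hf : Prime f) (h : ∀ z, eval z p = 0 → eval z (g * f) = 0)
    {z : σ → k} (hz : eval z p = 0) (hgz : eval z g ≠ 0) : f ∣ p := by
  by_contra hdvd
  have hmem : g * f ∈ (Ideal.span {p}).radical := by
    rw [← vanishingIdeal_zeroLocus_eq_radical (K := k), zeroLocus_span]
    simpa [coe_aeval_eq_eval] using h
  obtain ⟨N, hN⟩ := hmem
  rw [Ideal.mem_span_singleton, mul_pow] at hN
  have hrel : IsRelPrime p (f ^ N) :=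
    (hf.irreducible.isRelPrime_iff_not_dvd.2 hdvd).pow_left.symm
  obtain ⟨q, hq⟩ := hrel.dvd_of_dvd_mul_right hN
  have hgq := congrArg (eval z) hq
  rw [map_pow, map_mul, hz, zero_mul] at hgq
  exact hgz (eq_zero_of_pow_eq_zero hgq)

end Nullstellensatz

theorem totalDegree_pderiv_le {σ R : Type*} [CommSemiring R] (p : MvPolynomial σ R) (i : σ) :
    (pderiv i p).totalDegree ≤ p.totalDegree - 1 := by
  refine Finset.sup_le fun m hm => ?_
  rw [mem_support_iff, coeff_pderiv] at hm
  have hle := le_totalDegree (mem_support_iff.2 (left_ne_zero_of_mul hm))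
  rw [Finsupp.sum_add_index' (fun _ => rfl) (fun _ _ _ => rfl),
    Finsupp.sum_single_index rfl] at hle
  exact Nat.le_sub_one_of_lt hle

theorem tangential_linForm_eq_zero_of_dvd {σ k : Type*} [Fintype σ] [Field k]
    {f : MvPolynomial σ k} (hf : ¬ IsUnit f) {i j : σ} {u : σ → k}
    (h : f ∣ tangential f i j (linForm u)) : tangential f i j (linForm u) = 0 := by
  by_contra hne
  have hdeg_pos : f.totalDegree ≠ 0 := by
    intro hdeg
    rw [totalDegree_eq_zero_iff_eq_C] at hdeg
    have hcoeff : coeff 0 f ≠ 0 := by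
      intro h0
      rw [h0, C_0] at hdeg
      exact hne (zero_dvd_iff.1 (hdeg ▸ h))
    exact hf (hdeg ▸ (isUnit_iff_ne_zero.2 hcoeff).map C)
  have hdeg_le := totalDegree_le_of_dvd_of_isDomain h hne
  have hdeg_mul (l : σ) (c : k) : (pderiv l f * C c).totalDegree ≤ f.totalDegree - 1 := by
    refine (totalDegree_mul _ _).trans ?_
    rw [totalDegree_C, add_zero]
    exact totalDegree_pderiv_le f l
  have hdeg_sub : (tangential f i j (linForm u)).totalDegree ≤ f.totalDegree - 1 := by
    rw [tangential_apply, pderiv_linForm, pderiv_linForm]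
    exact (totalDegree_sub _ _).trans (max_le (hdeg_mul _ _) (hdeg_mul _ _))
  omega

section ExpRelation

variable {σ ι : Type*} {f : MvPolynomial σ ℂ} {q c : ι → MvPolynomial σ ℂ} {M : Finset ι}

/-- A nontrivial linear relation on the hypersurface `f = 0` between the functions `exp (q m)`,
`m ∈ M`, with polynomial coefficients `c m`. -/
structure IsExpRelation (f : MvPolynomial σ ℂ) (q : ι → MvPolynomial σ ℂ) (M : Finset ι)
    (c : ι → MvPolynomial σ ℂ) : Prop where
  nonempty : M.Nonempty
  not_dvd : ∀ m ∈ M, ¬ f ∣ c m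
  sum_eq_zero : ∀ z, eval z f = 0 → ∑ m ∈ M, eval z (c m) * Complex.exp (eval z (q m)) = 0

theorem isExpRelation_filter [DecidablePred fun m => ¬ f ∣ c m] (hne : ∃ m ∈ M, ¬ f ∣ c m)
    (hsum : ∀ z, eval z f = 0 → ∑ m ∈ M, eval z (c m) * Complex.exp (eval z (q m)) = 0) :
    IsExpRelation f q {m ∈ M | ¬ f ∣ c m} c where
  nonempty := Finset.filter_nonempty_iff.2 hne
  not_dvd m hm := (Finset.mem_filter.1 hm).2
  sum_eq_zero z hz := by
    rw [← hsum z hz]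
    refine Finset.sum_filter_of_ne fun m _ hm hdvd => hm ?_
    have hcz : eval z (c m) = 0 := zero_dvd_iff.1 (hz ▸ map_dvd (eval z) hdvd)
    rw [hcz, zero_mul]

theorem IsExpRelation.nontrivial [Finite σ] (hf : Prime f) (h : IsExpRelation f q M c) :
    M.Nontrivial := by
  obtain ⟨m, hm⟩ := h.nonempty
  by_contra hM
  obtain rfl : M = {m} := Finset.eq_singleton_iff_unique_mem.2
    ⟨hm, fun m' hm' => Set.not_nontrivial_iff.1 hM hm' hm⟩
  refine h.not_dvd m hm (dvd_of_eval_eq_zero hf fun z hz => ?_)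
  have := h.sum_eq_zero z hz
  rw [Finset.sum_singleton] at this
  exact (mul_eq_zero.1 this).resolve_right (Complex.exp_ne_zero _)

/-- Eliminating the `m₀`-term between the relation and its tangential derivative leaves a shorter
relation. -/
theorem IsExpRelation.dvd_of_minimal [Finite σ] (h : IsExpRelation f q M c)
    (hmin : ∀ M' c', IsExpRelation f q M' c' → M.card ≤ M'.card) {m₀ m₁ : ι} (hm₀ : m₀ ∈ M)
    (hm₁ : m₁ ∈ M) (i j : σ) :
    f ∣ c m₀ * tangential f i j (c m₁) - c m₁ * tangential f i j (c m₀)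
      + c m₀ * c m₁ * tangential f i j (q m₁ - q m₀) := by
  classical
  by_contra hdvd
  let d : ι → MvPolynomial σ ℂ := fun m => tangential f i j (c m) + c m * tangential f i j (q m)
  let e : ι → MvPolynomial σ ℂ := fun m => c m₀ * d m - c m * d m₀
  have hm₁' : ¬ f ∣ e m₁ := by
    convert hdvd using 2
    simp only [e, d, map_sub]
    ring
  have hrel : IsExpRelation f q {m ∈ M | ¬ f ∣ e m} e := by
    refine isExpRelation_filter ⟨m₁, hm₁, hm₁'⟩ fun z hz => ?_
    calc ∑ m ∈ M, eval z (e m) * Complex.exp (eval z (q m))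
        = eval z (c m₀) * ∑ m ∈ M, eval z (d m) * Complex.exp (eval z (q m))
          - eval z (d m₀) * ∑ m ∈ M, eval z (c m) * Complex.exp (eval z (q m)) := by
          rw [Finset.mul_sum, Finset.mul_sum, ← Finset.sum_sub_distrib]
          refine Finset.sum_congr rfl fun m _ => ?_
          simp only [e, map_sub, map_mul]
          ring
      _ = 0 := by
          rw [sum_tangential_mul_exp_eq_zero h.sum_eq_zero hz, h.sum_eq_zero z hz, mul_zero,
            mul_zero, sub_zero]
  refine (Finset.card_lt_card ?_).not_ge (hmin _ _ hrel)
  exact Finset.filter_ssubset.2 ⟨m₀, hm₀, by simp [e]⟩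

theorem IsExpRelation.exists_tangential_linForm_eq_zero [Fintype σ] {ω : ι → σ → ℂ}
    (hf : Prime f) (h : IsExpRelation f (fun m => linForm (ω m)) M c) :
    ∃ m₀ m₁, m₀ ≠ m₁ ∧ ∀ i j, tangential f i j (linForm (ω m₁ - ω m₀)) = 0 := by
  obtain ⟨⟨M, c⟩, hrel, hmin⟩ := exists_minimalFor_of_wellFoundedLT
    (fun r : Finset ι × (ι → MvPolynomial σ ℂ) =>
      IsExpRelation f (fun m => linForm (ω m)) r.1 r.2) (fun r => r.1.card) ⟨(M, c), h⟩
  obtain ⟨m₀, hm₀, m₁, hm₁, hne⟩ := hrel.nontrivial hf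
  refine ⟨m₀, m₁, hne, fun i j => tangential_linForm_eq_zero_of_dvd hf.not_isUnit
    (dvd_tangential_linForm hf (hrel.not_dvd m₀ hm₀) (hrel.not_dvd m₁ hm₁) ?_)⟩
  rw [linForm_sub]
  refine hrel.dvd_of_minimal (fun M' c' h' => ?_) hm₀ hm₁ i j
  exact (le_total _ _).elim id (hmin (j := (M', c')) h')

end ExpRelation

/-! ### Hyperplanes -/

open Matrix

section Hyperplane

variable {σ k : Type*} [Fintype σ] [Field k]

theorem eval_linForm (u z : σ → k) : eval z (linForm u) = u ⬝ᵥ z := by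
  simp [linForm, dotProduct]

variable [CharZero k] {f : MvPolynomial σ k} {u : σ → k}

theorem eval_add_of_dotProduct_eq_zero (hu : u ≠ 0)
    (h : ∀ i j, tangential f i j (linForm u) = 0) (z : σ → k) {v : σ → k} (hv : u ⬝ᵥ v = 0) :
    eval (z + v) f = eval z f := by
  obtain ⟨i, hi⟩ := Function.ne_iff.1 hu
  let line : MvPolynomial σ k →ₐ[k] Polynomial k :=
    aeval fun l => Polynomial.C (z l) + Polynomial.C (v l) * Polynomial.X
  have heval (t : k) (p : MvPolynomial σ k) : (line p).eval t = eval (z + t • v) p := by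
    have hpt : z + t • v = fun l => Polynomial.aeval t
        (Polynomial.C (z l) + Polynomial.C (v l) * Polynomial.X) := by
      ext l
      simpa using mul_comm _ _
    rw [← Polynomial.coe_aeval_eq_eval, comp_aeval_apply, ← hpt, aeval_eq_eval, eval]
  have hderiv : (line f).derivative = 0 := by
    have hchain : (line f).derivative = ∑ l, line (pderiv l f) * Polynomial.C (v l) := by
      simpa [line] using derivation_map_mvPolynomial Polynomial.derivative' line.toRingHom
        (by simp) f
    refine (mul_eq_zero.1 ?_).resolve_left (Polynomial.C_ne_zero.2 hi)
    calc Polynomial.C (u i) * (line f).derivative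
        = ∑ l, line (pderiv i f) * Polynomial.C (u l * v l) := by
          rw [hchain, Finset.mul_sum]
          refine Finset.sum_congr rfl fun l _ => ?_
          have hl : line (pderiv l f) * Polynomial.C (u i)
              = line (pderiv i f) * Polynomial.C (u l) := by
            have := congrArg line (h i l)
            simpa [tangential_apply, pderiv_linForm, line, sub_eq_zero] using this
          rw [map_mul]
          linear_combination Polynomial.C (v l) * hl
      _ = 0 := by
          rw [← Finset.mul_sum, ← map_sum]
          change _ * Polynomial.C (u ⬝ᵥ v) = 0
          rw [hv, map_zero, mul_zero]
  have hconst := Polynomial.eq_C_of_derivative_eq_zero hderiv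
  have h1 := heval 1 f
  have h0 := heval 0 f
  rw [hconst, Polynomial.eval_C] at h0 h1
  simpa using h1.symm.trans h0

theorem exists_eval_eq_zero_iff_dotProduct_eq [IsAlgClosed k] (hf : Prime f) (hu : u ≠ 0)
    (h : ∀ i j, tangential f i j (linForm u) = 0) : ∃ c, ∀ z, eval z f = 0 ↔ u ⬝ᵥ z = c := by
  obtain ⟨z₀, hz₀⟩ : ∃ z, eval z f = 0 := by
    by_contra! hne
    exact hf.not_isUnit (isUnit_of_dvd_one (dvd_of_eval_eq_zero hf fun z hz => absurd hz (hne z)))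
  have hvan (z : σ → k) (hz : u ⬝ᵥ z = u ⬝ᵥ z₀) : eval z f = 0 := by
    have := eval_add_of_dotProduct_eq_zero hu h z₀ (v := z - z₀)
      (by rw [dotProduct_sub, hz, sub_self])
    rwa [add_sub_cancel, hz₀] at this
  have hp (z : σ → k) : eval z (linForm u - C (u ⬝ᵥ z₀)) = 0 ↔ u ⬝ᵥ z = u ⬝ᵥ z₀ := by
    rw [map_sub, eval_linForm, eval_C, sub_eq_zero]
  have hdvd : f ∣ linForm u - C (u ⬝ᵥ z₀) :=
    dvd_of_eval_mul_eq_zero (g := 1) (z := z₀) hf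
      (fun z hz => by rw [one_mul, hvan z ((hp z).1 hz)]) ((hp z₀).2 rfl) (by simp)
  exact ⟨u ⬝ᵥ z₀, fun z => ⟨fun hz => (hp z).1 (zero_dvd_iff.1 (hz ▸ map_dvd (eval z) hdvd)),
    hvan z⟩⟩

end Hyperplane

theorem exists_eq_smul_dotProduct_eq_one {σ R : Type*} [Fintype σ] [CommRing R] [IsDomain R]
    [IsPrincipalIdealRing R] {u : σ → R} (hu : u ≠ 0) :
    ∃ (d : R) (v b : σ → R), u = d • v ∧ v ⬝ᵥ b = 1 := by
  obtain ⟨d, hd⟩ := (IsPrincipalIdealRing.principal (Ideal.span (Set.range u))).principal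
  have hdvd (i : σ) : d ∣ u i := by
    rw [← Ideal.mem_span_singleton, ← Ideal.submodule_span_eq, ← hd]
    exact Ideal.subset_span ⟨i, rfl⟩
  choose v hv using hdvd
  obtain rfl : u = d • v := funext hv
  obtain ⟨b, hb⟩ := Ideal.mem_span_range_iff_exists_fun.1
    (hd ▸ Submodule.mem_span_singleton_self d)
  refine ⟨d, v, b, rfl, mul_left_cancel₀ (left_ne_zero_of_smul hu) ?_⟩
  rw [← smul_eq_mul, ← smul_dotProduct, mul_one, dotProduct_comm]
  exact hb

theorem exists_eval_ne_zero_of_ne_zero {σ k : Type*} [Field k] [Infinite k]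
    {p : MvPolynomial σ k} (hp : p ≠ 0) : ∃ x : σ → k, (∀ l, x l ≠ 0) ∧ eval x p ≠ 0 := by
  by_contra! h
  refine hp (funext_set (fun _ : σ => {0}ᶜ) (fun _ => (Set.finite_singleton _).infinite_compl)
    fun x hx => ?_)
  rw [h x fun l => hx l (Set.mem_univ l), map_zero]

section AlgebraicCoefficients

variable {σ k K : Type*} [DecidableEq σ] [Field k] [Infinite k] [Field K] [Algebra k K]

theorem exists_isAlgebraic_of_eval_update_eq_zero {f : MvPolynomial σ K}
    (halg : ∀ m, IsAlgebraic k (coeff m f)) (hf : f ≠ 0) (i : σ) :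
    ∃ x : σ → K, (∀ l, IsAlgebraic k (x l) ∧ x l ≠ 0) ∧
      ∀ t, eval (Function.update x i t) f = 0 → IsAlgebraic k t := by
  obtain ⟨p, rfl⟩ : f ∈ Set.range (map (algebraMap (algebraicClosure k K) K)) := by
    rw [mem_range_map_iff_coeffs_subset]
    intro y hy
    obtain ⟨m, -, rfl⟩ := mem_coeffs_iff.1 hy
    exact ⟨⟨_, mem_algebraicClosure_iff.2 (halg m)⟩, rfl⟩
  have : Infinite (algebraicClosure k K) :=
    .of_injective _ (algebraMap k (algebraicClosure k K)).injective
  have hp : p ≠ 0 := by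
    rintro rfl
    exact hf (map_zero _)
  obtain ⟨x, hxl, hx⟩ := exists_eval_ne_zero_of_ne_zero hp
  let q : Polynomial (algebraicClosure k K) :=
    aeval (Function.update (fun l => Polynomial.C (x l)) i Polynomial.X) p
  have hq (t : K) : Polynomial.aeval t q
      = eval (Function.update (fun l => (x l : K)) i t) (map (algebraMap _ K) p) := by
    rw [comp_aeval_apply, eval_map, ← aeval_def]
    congr 2
    ext l
    rcases eq_or_ne l i with rfl | hl
    · simp
    · simp [hl]
  have hq0 : q ≠ 0 := by
    intro hq0
    have hpx := hq (x i)
    rw [hq0, map_zero, Function.update_eq_self, eval_map, ← aeval_def] at hpx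
    have hpx' : algebraMap _ K (eval x p) = 0 :=
      (aeval_algebraMap_apply K x p).symm.trans hpx.symm
    exact hx ((map_eq_zero _).1 hpx')
  refine ⟨fun l => x l, fun l => ⟨mem_algebraicClosure_iff.1 (x l).2, ?_⟩, fun t ht => ?_⟩
  · exact (map_ne_zero (algebraMap _ K)).2 (hxl l)
  have : Algebra.IsAlgebraic k (algebraicClosure k K) := algebraicClosure.isAlgebraic k K
  exact IsAlgebraic.restrictScalars k ⟨q, hq0, (hq t).trans ht⟩

end AlgebraicCoefficients

/-! ### Irreducible closed sets and dimension -/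

section Dimension

variable {n : ℕ} {S : Set (Fin n → ℂ)}

/-- The algebraic torus `(ℂ^*)^n`, as the set of points of `ℂ^n` with nonzero coordinates. -/
def torus (n : ℕ) : Set (Fin n → ℂ) := {z | ∀ i, z i ≠ 0}

theorem mem_vanishingIdeal_iff_eval {p : MvPolynomial (Fin n) ℂ} :
    p ∈ vanishingIdeal ℂ S ↔ ∀ z ∈ S, eval z p = 0 := by
  simp only [mem_vanishingIdeal_iff, aeval_eq_eval]

theorem zClosed_eval_eq_zero (p : MvPolynomial (Fin n) ℂ) : ZClosed n {z | eval z p = 0} :=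
  ⟨{p}, by simp⟩

theorem isIrrOf_zClosed_iff_isPrime :
    IsIrrOf (ZClosed n) S ↔ (vanishingIdeal ℂ S).IsPrime := by
  constructor
  · rintro ⟨⟨z, hz⟩, hunion⟩
    refine ⟨fun htop => ?_, fun {p q} hpq => ?_⟩
    · have hone := (Ideal.eq_top_iff_one _).1 htop
      simpa using mem_vanishingIdeal_iff_eval.1 hone z hz
    · simp only [mem_vanishingIdeal_iff_eval] at hpq ⊢
      exact hunion _ _ (zClosed_eval_eq_zero p) (zClosed_eval_eq_zero q) fun x hx =>
        mul_eq_zero.1 ((map_mul (eval x) p q).symm.trans (hpq x hx))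
  · intro hprime
    refine ⟨Set.nonempty_iff_ne_empty.2 ?_, ?_⟩
    · rintro rfl
      exact hprime.ne_top vanishingIdeal_empty
    · rintro _ _ ⟨P, rfl⟩ ⟨Q, rfl⟩ hunion
      by_contra! hne
      obtain ⟨⟨a, ha, haP⟩, b, hb, hbQ⟩ := hne.imp Set.not_subset.1 Set.not_subset.1
      simp only [Set.mem_ofPred_eq, not_forall] at haP hbQ
      obtain ⟨⟨p, hp, hpa⟩, q, hq, hqb⟩ := And.intro haP hbQ
      have hpq : p * q ∈ vanishingIdeal ℂ S := mem_vanishingIdeal_iff_eval.2 fun x hx => by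
        rw [map_mul, mul_eq_zero]
        exact (hunion hx).imp (fun h => h p hp) (fun h => h q hq)
      exact (hprime.mem_or_mem hpq).elim (fun h => hpa (mem_vanishingIdeal_iff_eval.1 h a ha))
        (fun h => hqb (mem_vanishingIdeal_iff_eval.1 h b hb))

theorem isIrrOf_eval_eq_zero {f : MvPolynomial (Fin n) ℂ} (hf : Prime f) :
    IsIrrOf (ZClosed n) {z | eval z f = 0} := by
  have hvan : vanishingIdeal ℂ {z | eval z f = 0} = Ideal.span {f} := by
    ext p
    rw [mem_vanishingIdeal_iff_eval, Ideal.mem_span_singleton]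
    refine ⟨dvd_of_eval_eq_zero hf, fun h z hz => ?_⟩
    exact zero_dvd_iff.1 (hz ▸ map_dvd (eval z) h)
  rw [isIrrOf_zClosed_iff_isPrime, hvan]
  exact (Ideal.span_singleton_prime hf.ne_zero).2 hf

theorem isIrrOf_univ : IsIrrOf (ZClosed n) Set.univ := by
  have hvan : vanishingIdeal ℂ (Set.univ : Set (Fin n → ℂ)) = ⊥ := by
    refine eq_bot_iff.2 fun p hp => MvPolynomial.funext fun z => ?_
    rw [mem_vanishingIdeal_iff_eval.1 hp z (Set.mem_univ z), map_zero]
  rw [isIrrOf_zClosed_iff_isPrime, hvan]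
  exact Ideal.isPrime_bot

theorem isIrrOf_zClosedTorus_iff (hS : S ⊆ torus n) :
    IsIrrOf (ZClosedTorus n) S ↔ IsIrrOf (ZClosed n) S := by
  refine and_congr_right fun _ => ⟨fun h => ?_, fun h => ?_⟩
  · rintro _ _ ⟨P, rfl⟩ ⟨Q, rfl⟩ hunion
    refine (h _ _ ⟨P, rfl⟩ ⟨Q, rfl⟩ fun x hx => ?_).imp (fun h x hx => (h hx).2)
      (fun h x hx => (h hx).2)
    exact (hunion hx).imp (⟨hS hx, ·⟩) (⟨hS hx, ·⟩)
  · rintro _ _ ⟨P, rfl⟩ ⟨Q, rfl⟩ hunion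
    refine (h _ _ ⟨P, rfl⟩ ⟨Q, rfl⟩ fun x hx => ?_).imp (fun h x hx => ⟨hS hx, h hx⟩)
      (fun h x hx => ⟨hS hx, h hx⟩)
    exact (hunion hx).imp And.right And.right

theorem dimOf_add_one_le_of_ssubset {α : Type*} {Closed : Set α → Prop} {A B : Set α}
    (hA : Closed A ∧ IsIrrOf Closed A) (hB : Closed B ∧ IsIrrOf Closed B) (hAB : A ⊂ B) :
    dimOf Closed A + 1 ≤ dimOf Closed B := by
  have hpoint : dimOf Closed A + 1 = _ := ENat.sSup_add ⟨((0 : ℕ) : ℕ∞), 0, rfl, fun _ => A,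
    fun _ => ⟨hA.1, hA.2, subset_rfl⟩, fun i j hij => by omega⟩
  rw [hpoint]
  refine iSup₂_le ?_
  rintro _ ⟨d, rfl, Z, hZ, hmono⟩
  refine le_sSup ⟨d + 1, by push_cast; rfl, Fin.snoc Z B, fun i => ?_, ?_⟩
  · refine Fin.lastCases ?_ (fun i => ?_) i
    · simpa using ⟨hB.1, hB.2⟩
    · simpa using ⟨(hZ i).1, (hZ i).2.1, (hZ i).2.2.trans hAB.subset⟩
  · intro i j hij
    obtain ⟨i, rfl⟩ := Fin.exists_castSucc_eq.2 (Fin.ne_last_of_lt hij)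
    refine Fin.lastCases (fun _ => ?_) (fun j hij => ?_) j hij
    · simpa using (hZ i).2.2.trans_ssubset hAB
    · simpa using hmono i j (Fin.castSucc_lt_castSucc_iff.1 hij)

theorem vanishingIdeal_lt_of_ssubset {A B : Set (Fin n → ℂ)} (hA : ZClosed n A) (hAB : A ⊂ B) :
    vanishingIdeal ℂ B < vanishingIdeal ℂ A := by
  refine lt_of_le_not_ge (vanishingIdeal_anti_mono hAB.subset) fun hle => hAB.not_subset ?_
  obtain ⟨P, rfl⟩ := hA
  exact fun z hz p hp => mem_vanishingIdeal_iff_eval.1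
    (hle (mem_vanishingIdeal_iff_eval.2 fun y hy => hy p hp)) z hz

theorem dimOf_zClosed_le (S : Set (Fin n → ℂ)) : dimOf (ZClosed n) S ≤ n := by
  refine sSup_le ?_
  rintro _ ⟨d, rfl, Z, hZ, hmono⟩
  let s : LTSeries (PrimeSpectrum (MvPolynomial (Fin n) ℂ)) :=
    { length := d
      toFun := fun k => ⟨vanishingIdeal ℂ (Z k.rev),
        isIrrOf_zClosed_iff_isPrime.1 (hZ _).2.1⟩
      step := fun k => vanishingIdeal_lt_of_ssubset (hZ _).1
        (hmono _ _ (Fin.rev_lt_rev.2 Fin.castSucc_lt_succ)) }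
  have hlen := Order.LTSeries.length_le_krullDim s
  rw [← ringKrullDim, MvPolynomial.ringKrullDim_of_isNoetherianRing] at hlen
  simpa [s] using hlen

theorem eq_eval_eq_zero_of_le_dimOf (hS : ZClosed n S) (hirr : IsIrrOf (ZClosed n) S)
    (hdim : (n : ℕ∞) ≤ dimOf (ZClosed n) S + 1) {f : MvPolynomial (Fin n) ℂ} (hf : Prime f)
    (hSf : ∀ z ∈ S, eval z f = 0) : S = {z | eval z f = 0} := by
  by_contra hne
  have hirr_f := isIrrOf_eval_eq_zero hf
  have hproper : {z | eval z f = 0} ⊂ Set.univ := by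
    refine Set.ssubset_univ_iff.2 fun h => hf.ne_zero (MvPolynomial.funext fun z => ?_)
    rw [map_zero]
    exact h.symm.subset (Set.mem_univ z)
  have hS_lt := dimOf_add_one_le_of_ssubset ⟨hS, hirr⟩ ⟨zClosed_eval_eq_zero f, hirr_f⟩
    (Set.ssubset_iff_subset_ne.2 ⟨hSf, hne⟩)
  have hf_lt := dimOf_add_one_le_of_ssubset ⟨zClosed_eval_eq_zero f, hirr_f⟩
    ⟨⟨∅, by simp⟩, isIrrOf_univ⟩ hproper
  have : (n : ℕ∞) + 1 ≤ n :=
    (add_le_add_left (hdim.trans hS_lt) 1).trans (hf_lt.trans (dimOf_zClosed_le _))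
  exact absurd this (by exact_mod_cast n.not_succ_le_self)

/-- The subtorus of `(ℂ^*)^n` on which the coordinates of index at least `k` are `1`. -/
def coordinateSubtorus (n k : ℕ) : Set (Fin n → ℂ) :=
  {x | x ∈ torus n ∧ ∀ i : Fin n, k ≤ (i : ℕ) → x i = 1}

theorem zClosedTorus_coordinateSubtorus (n k : ℕ) : ZClosedTorus n (coordinateSubtorus n k) := by
  refine ⟨{p | ∃ i : Fin n, k ≤ (i : ℕ) ∧ p = X i - 1}, ?_⟩
  ext x
  refine and_congr_right fun _ => ⟨?_, fun h i hi => ?_⟩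
  · rintro h _ ⟨i, hi, rfl⟩
    simp [h i hi]
  · simpa [sub_eq_zero] using h _ ⟨i, hi, rfl⟩

theorem isIrrOf_coordinateSubtorus (n k : ℕ) :
    IsIrrOf (ZClosedTorus n) (coordinateSubtorus n k) := by
  let ρ : MvPolynomial (Fin n) ℂ →ₐ[ℂ] MvPolynomial (Fin n) ℂ :=
    bind₁ fun i => if k ≤ (i : ℕ) then 1 else X i
  have hρ (x : Fin n → ℂ) (p) :
      eval x (ρ p) = eval (fun i : Fin n => if k ≤ (i : ℕ) then 1 else x i) p := by
    have hpt : (fun i : Fin n => if k ≤ (i : ℕ) then 1 else x i)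
        = fun i : Fin n =>
          aeval x (if k ≤ (i : ℕ) then (1 : MvPolynomial (Fin n) ℂ) else X i) := by
      ext i
      split_ifs <;> simp
    rw [← aeval_eq_eval, aeval_bind₁, ← hpt, aeval_eq_eval]
  have hker : vanishingIdeal ℂ (coordinateSubtorus n k) = RingHom.ker ρ := by
    ext p
    rw [mem_vanishingIdeal_iff_eval, RingHom.mem_ker]
    constructor
    · intro h
      by_contra hp
      obtain ⟨x, hx, hpx⟩ := exists_eval_ne_zero_of_ne_zero hp
      refine hpx ((hρ x p).trans (h _ ⟨fun i => ?_, fun i hi => if_pos hi⟩))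
      dsimp only
      split_ifs
      exacts [one_ne_zero, hx i]
    · intro hp x hx
      have hx_eq : (fun i : Fin n => if k ≤ (i : ℕ) then 1 else x i) = x :=
        funext fun i => ite_eq_right_iff.2 fun hi => (hx.2 i hi).symm
      rw [← hx_eq, ← hρ, hp, map_zero]
  rw [isIrrOf_zClosedTorus_iff fun x hx => hx.1, isIrrOf_zClosed_iff_isPrime, hker]
  exact RingHom.ker_isPrime _

theorem le_dimOf_torus (n : ℕ) : (n : ℕ∞) ≤ dimOf (ZClosedTorus n) (torus n) := by
  refine le_sSup ⟨n, rfl, fun k => coordinateSubtorus n k, fun k =>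
    ⟨zClosedTorus_coordinateSubtorus n k, isIrrOf_coordinateSubtorus n k, fun x hx => hx.1⟩,
    fun j k hjk => ?_⟩
  have hj : (j : ℕ) < n := by omega
  have hsub : coordinateSubtorus n j ⊆ coordinateSubtorus n k :=
    fun x hx => ⟨hx.1, fun i hi => hx.2 i (by omega)⟩
  refine (Set.ssubset_iff_of_subset hsub).2
    ⟨Function.update 1 ⟨j, hj⟩ 2, ⟨fun i => ?_, fun i hi => ?_⟩, fun h => ?_⟩
  · rw [Function.update_apply]
    split_ifs <;> simp
  · rw [Function.update_of_ne (by rintro rfl; exact absurd hi (by simpa using hjk)), Pi.one_apply]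
  · simpa using h.2 ⟨j, hj⟩ le_rfl

end Dimension

/-! ### The exponential map and integral hyperplanes -/

section ExpMap

variable {n : ℕ} {x z : Fin n → ℂ} {v b : Fin n → ℤ} {c : ℂ}

theorem expMap_mem_torus (z : Fin n → ℂ) : expMap n z ∈ torus n :=
  fun _ => Complex.exp_ne_zero _

theorem exists_expMap_eq (hx : x ∈ torus n) : ∃ z, expMap n z = x := by
  refine ⟨fun i => Complex.log (x i) / (2 * Real.pi * Complex.I), funext fun i => ?_⟩
  rw [expMap, mul_div_cancel₀ _ Complex.two_pi_I_ne_zero, Complex.exp_log (hx i)]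

theorem expMap_add (z w : Fin n → ℂ) : expMap n (z + w) = expMap n z * expMap n w := by
  ext i
  simp only [expMap, Pi.add_apply, Pi.mul_apply, mul_add, Complex.exp_add]

theorem expMap_intCast (k : Fin n → ℤ) : expMap n (Int.cast ∘ k) = 1 :=
  funext fun i => Complex.exp_eq_one_iff.2 ⟨k i, mul_comm _ _⟩

theorem expMap_update (z : Fin n → ℂ) (i : Fin n) (t : ℂ) :
    expMap n (Function.update z i t)
      = Function.update (expMap n z) i (Complex.exp (2 * Real.pi * Complex.I * t)) := by
  ext l
  rcases eq_or_ne l i with rfl | hl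
  · simp [expMap]
  · simp [expMap, hl]

theorem prod_expMap_zpow (v : Fin n → ℤ) (z : Fin n → ℂ) :
    ∏ l, expMap n z l ^ v l
      = Complex.exp (2 * Real.pi * Complex.I * ((Int.cast ∘ v : Fin n → ℂ) ⬝ᵥ z)) := by
  simp only [expMap, ← Complex.exp_int_mul, ← Complex.exp_sum, dotProduct, Finset.mul_sum]
  congr! 2 with l
  exact mul_left_comm _ _ _

theorem isTorsionPoint_expMap_ratCast (r : Fin n → ℚ) :
    IsTorsionPoint n (expMap n (Rat.cast ∘ r)) := by
  refine fun i => ⟨(r i).den, (r i).den_pos, ?_⟩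
  rw [expMap, ← Complex.exp_nat_mul, Complex.exp_eq_one_iff]
  have hnum : ((r i).num : ℂ) = (r i).den * (r i : ℂ) := by
    exact_mod_cast (Rat.den_mul_eq_num (r i)).symm
  refine ⟨(r i).num, ?_⟩
  rw [hnum, Function.comp_apply]
  ring

theorem isSubtorus_expMap_image_range {m : ℕ} (A : Matrix (Fin n) (Fin m) ℤ) :
    IsSubtorus n (expMap n '' Set.range fun w : Fin m → ℂ => A.map Int.cast *ᵥ w) := by
  have hmul (w : Fin m → ℂ) (l : Fin n) :
      expMap n (A.map Int.cast *ᵥ w) l = ∏ j, expMap m w j ^ A l j := by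
    rw [prod_expMap_zpow]
    rfl
  refine ⟨m, A, Set.ext fun x => ⟨?_, ?_⟩⟩
  · rintro ⟨_, ⟨w, rfl⟩, rfl⟩
    exact ⟨expMap m w, expMap_mem_torus w, hmul w⟩
  · rintro ⟨y, hy, hx⟩
    obtain ⟨w, rfl⟩ := exists_expMap_eq hy
    exact ⟨_, ⟨w, rfl⟩, funext fun l => (hmul w l).trans (hx l).symm⟩

/-- The hyperplane `v₁z₁ + ⋯ + vₙzₙ = c` of `ℂ^n` with integral normal vector `v`. -/
def integralHyperplane (v : Fin n → ℤ) (c : ℂ) : Set (Fin n → ℂ) :=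
  {z | (Int.cast ∘ v : Fin n → ℂ) ⬝ᵥ z = c}

theorem add_smul_mem_integralHyperplane (hvb : v ⬝ᵥ b = 1) (hz : z ∈ integralHyperplane v c)
    (t : ℂ) : z + t • (Int.cast ∘ b) ∈ integralHyperplane v (c + t) := by
  have hcast : (Int.cast ∘ v : Fin n → ℂ) ⬝ᵥ (Int.cast ∘ b) = 1 := by
    have := (Int.castRingHom ℂ).map_dotProduct v b
    rw [hvb, map_one] at this
    exact this.symm
  change _ ⬝ᵥ _ = _
  rw [dotProduct_add, hz, dotProduct_smul, hcast, smul_eq_mul, mul_one]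

theorem mem_expMap_image_integralHyperplane_iff (hvb : v ⬝ᵥ b = 1) :
    x ∈ expMap n '' integralHyperplane v c ↔
      x ∈ torus n ∧ ∏ l, x l ^ v l = Complex.exp (2 * Real.pi * Complex.I * c) := by
  constructor
  · rintro ⟨z, rfl, rfl⟩
    exact ⟨expMap_mem_torus z, prod_expMap_zpow v z⟩
  · rintro ⟨hx, hprod⟩
    obtain ⟨z, rfl⟩ := exists_expMap_eq hx
    rw [prod_expMap_zpow, Complex.exp_eq_exp_iff_exists_int] at hprod
    obtain ⟨k, hk⟩ := hprod
    have hz : z ∈ integralHyperplane v (c + k) := by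
      refine mul_left_cancel₀ Complex.two_pi_I_ne_zero (hk.trans ?_)
      ring
    refine ⟨z + (-k : ℂ) • (Int.cast ∘ b), ?_, ?_⟩
    · simpa using add_smul_mem_integralHyperplane hvb hz (-k)
    · have hshift : (-k : ℂ) • (Int.cast ∘ b : Fin n → ℂ) = Int.cast ∘ (-k • b) := by
        ext l
        simp
      rw [hshift, expMap_add, expMap_intCast, mul_one]

theorem integralHyperplane_zero_eq_range (hvb : v ⬝ᵥ b = 1) :
    integralHyperplane v 0
      = Set.range fun w : Fin n → ℂ => (1 - vecMulVec b v).map Int.cast *ᵥ w := by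
  have hproj (w : Fin n → ℂ) : (1 - vecMulVec b v).map Int.cast *ᵥ w
      = w + (-((Int.cast ∘ v : Fin n → ℂ) ⬝ᵥ w)) • (Int.cast ∘ b) := by
    have hmap : (1 - vecMulVec b v).map (Int.cast : ℤ → ℂ)
        = 1 - vecMulVec (Int.cast ∘ b) (Int.cast ∘ v) := by
      ext i j
      simp [Matrix.one_apply, vecMulVec_apply]
    rw [hmap, sub_mulVec, one_mulVec, vecMulVec_mulVec, op_smul_eq_smul]
    module
  ext z
  constructor
  · intro hz
    refine ⟨z, ?_⟩
    change _ ⬝ᵥ _ = _ at hz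
    simp only [hproj, hz, neg_zero, zero_smul, add_zero]
  · rintro ⟨w, rfl⟩
    have hw : w ∈ integralHyperplane v ((Int.cast ∘ v : Fin n → ℂ) ⬝ᵥ w) := rfl
    simpa only [hproj, add_neg_cancel] using
      add_smul_mem_integralHyperplane hvb hw (-((Int.cast ∘ v : Fin n → ℂ) ⬝ᵥ w))

theorem isTorsionTranslateOfSubtorus_expMap_image (hvb : v ⬝ᵥ b = 1) (r : ℚ) :
    IsTorsionTranslateOfSubtorus n (expMap n '' integralHyperplane v r) := by
  have htranslate : integralHyperplane v r
      = (fun z => (r : ℂ) • (Int.cast ∘ b) + z) '' integralHyperplane v 0 := by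
    ext z
    constructor
    · intro hz
      refine ⟨z + (-r : ℂ) • (Int.cast ∘ b), ?_, ?_⟩
      · simpa using add_smul_mem_integralHyperplane hvb hz (-r)
      · module
    · rintro ⟨w, hw, rfl⟩
      simpa [add_comm] using add_smul_mem_integralHyperplane hvb hw r
  refine ⟨expMap n (Rat.cast ∘ (r • (Int.cast ∘ b : Fin n → ℚ))),
    expMap n '' integralHyperplane v 0, isTorsionPoint_expMap_ratCast _, ?_, ?_⟩
  · rw [integralHyperplane_zero_eq_range hvb]
    exact isSubtorus_expMap_image_range _
  · have hcast : (Rat.cast ∘ (r • (Int.cast ∘ b : Fin n → ℚ)) : Fin n → ℂ)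
        = (r : ℂ) • (Int.cast ∘ b) := by
      ext l
      simp
    rw [htranslate, Set.image_image, Set.image_image, hcast]
    simp only [expMap_add]
    rfl

end ExpMap

/-! ### Rationality of the hyperplane and the image of the exponential map -/

section Rationality

variable {n : ℕ} {S T : Set (Fin n → ℂ)} {x : Fin n → ℂ} {v b : Fin n → ℤ} {c : ℂ}

theorem ZClosedQbar.zClosed (h : ZClosedQbar n S) : ZClosed n S :=
  h.imp fun _ => And.right

theorem ZClosedTorusQbar.subset_torus (h : ZClosedTorusQbar n T) : T ⊆ torus n := by
  obtain ⟨Q, -, rfl⟩ := h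
  exact fun _ => And.left

theorem ZClosedQbar.exists_ne_zero (h : ZClosedQbar n S) (hne : S ≠ Set.univ) :
    ∃ p ≠ 0, (∀ m, IsAlgebraic ℚ (coeff m p)) ∧ ∀ z ∈ S, eval z p = 0 := by
  obtain ⟨P, hP, rfl⟩ := h
  by_contra! hzero
  refine hne (Set.eq_univ_of_forall fun z p hp => ?_)
  by_contra hpz
  obtain ⟨w, hw, hpw⟩ := hzero p (by rintro rfl; exact hpz (map_zero _)) (hP p hp)
  exact hpw (hw p hp)

theorem ZClosedTorusQbar.exists_ne_zero (h : ZClosedTorusQbar n T) (hne : T ≠ torus n) :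
    ∃ p ≠ 0, (∀ m, IsAlgebraic ℚ (coeff m p)) ∧ ∀ z ∈ T, eval z p = 0 := by
  have hsub := h.subset_torus
  obtain ⟨Q, hQ, rfl⟩ := h
  by_contra! hzero
  refine hne (hsub.antisymm fun z hz => ⟨hz, fun p hp => ?_⟩)
  by_contra hpz
  obtain ⟨w, hw, hpw⟩ := hzero p (by rintro rfl; exact hpz (map_zero _)) (hQ p hp)
  exact hpw (hw.2 p hp)

theorem exists_ne_zero_of_dotProduct_eq_one (hvb : v ⬝ᵥ b = 1) : ∃ i, v i ≠ 0 := by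
  by_contra! h
  rw [funext h] at hvb
  simp at hvb

theorem exists_update_mem_integralHyperplane {i : Fin n} (hi : v i ≠ 0) (z : Fin n → ℂ) (c : ℂ) :
    ∃ t, Function.update z i t ∈ integralHyperplane v c := by
  have hi' : (v i : ℂ) ≠ 0 := Int.cast_ne_zero.2 hi
  set s := (c - (Int.cast ∘ v : Fin n → ℂ) ⬝ᵥ z) / v i with hs
  have hupdate : Function.update z i (z i + s) = z + Pi.single i s := by
    ext l
    rcases eq_or_ne l i with rfl | hl
    · simp
    · simp [hl]
  refine ⟨z i + s, ?_⟩
  change _ ⬝ᵥ _ = _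
  rw [hupdate, dotProduct_add, dotProduct_single, hs, Function.comp_apply, mul_div_cancel₀ _ hi',
    add_sub_cancel]

theorem isAlgebraic_of_zClosedQbar_integralHyperplane {i : Fin n} (hi : v i ≠ 0)
    (h : ZClosedQbar n (integralHyperplane v c)) : IsAlgebraic ℚ c := by
  have hne : integralHyperplane v c ≠ Set.univ := by
    intro huniv
    obtain ⟨t, ht⟩ := exists_update_mem_integralHyperplane hi 0 (c + 1)
    have hmem : Function.update (0 : Fin n → ℂ) i t ∈ integralHyperplane v c :=
      huniv ▸ Set.mem_univ _
    exact one_ne_zero (left_eq_add.1 (hmem.symm.trans ht))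
  obtain ⟨p, hp, halg, hvan⟩ := h.exists_ne_zero hne
  obtain ⟨x, hx, hroot⟩ := exists_isAlgebraic_of_eval_update_eq_zero halg hp i
  obtain ⟨t, ht⟩ := exists_update_mem_integralHyperplane hi x c
  have halg_update (l : Fin n) : IsAlgebraic ℚ (Function.update x i t l) := by
    rcases eq_or_ne l i with rfl | hl
    · simpa using hroot t (hvan _ ht)
    · simpa [hl] using (hx l).1
  rw [← (show _ ⬝ᵥ _ = c from ht)]
  simp only [← mem_algebraicClosure_iff] at halg_update ⊢
  exact sum_mem fun l _ => mul_mem (intCast_mem _ _) (halg_update l)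

theorem isAlgebraic_exp_of_expMap_image_subset {i : Fin n} (hi : v i ≠ 0)
    (hT : ZClosedTorusQbar n T) (hne : T ≠ torus n)
    (hsub : expMap n '' integralHyperplane v c ⊆ T) :
    IsAlgebraic ℚ (Complex.exp (2 * Real.pi * Complex.I * c)) := by
  obtain ⟨p, hp, halg, hvan⟩ := hT.exists_ne_zero hne
  obtain ⟨x, hx, hroot⟩ := exists_isAlgebraic_of_eval_update_eq_zero halg hp i
  obtain ⟨z, rfl⟩ := exists_expMap_eq fun l => (hx l).2
  obtain ⟨t, ht⟩ := exists_update_mem_integralHyperplane hi z c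
  have hzero := hvan _ (hsub ⟨_, ht, rfl⟩)
  rw [expMap_update] at hzero
  have halg_update (l : Fin n) : IsAlgebraic ℚ (expMap n (Function.update z i t) l) := by
    rw [expMap_update]
    rcases eq_or_ne l i with rfl | hl
    · simpa using hroot _ hzero
    · simpa [hl] using (hx l).1
  rw [← (show _ ⬝ᵥ _ = c from ht), ← prod_expMap_zpow]
  simp only [← mem_algebraicClosure_iff] at halg_update ⊢
  exact prod_mem fun l _ => zpow_mem (halg_update l) _

/-- The polynomial `∏_{v_l > 0} X_l ^ v_l - a ∏_{v_l < 0} X_l ^ (-v_l)`, which cuts out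
`∏ x_l ^ v_l = a` in the torus. -/
def toricBinomial (v : Fin n → ℤ) (a : ℂ) : MvPolynomial (Fin n) ℂ :=
  ∏ l, X l ^ (v l).toNat - C a * ∏ l, X l ^ (-v l).toNat

theorem eval_toricBinomial_eq_zero_iff (hx : x ∈ torus n) {a : ℂ} :
    eval x (toricBinomial v a) = 0 ↔ ∏ l, x l ^ v l = a := by
  have hdiv : ∏ l, x l ^ v l = (∏ l, x l ^ (v l).toNat) / ∏ l, x l ^ (-v l).toNat := by
    rw [← Finset.prod_div_distrib]
    refine Finset.prod_congr rfl fun l _ => ?_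
    rw [← zpow_natCast, ← zpow_natCast, ← zpow_sub₀ (hx l)]
    congr 1
    omega
  rw [hdiv, div_eq_iff (Finset.prod_ne_zero_iff.2 fun l _ => pow_ne_zero _ (hx l))]
  simp [toricBinomial, sub_eq_zero]

theorem mem_expMap_image_of_eval_eq_zero (hvb : v ⬝ᵥ b = 1) {g : MvPolynomial (Fin n) ℂ}
    (hg : Prime g) (hvan : ∀ y ∈ expMap n '' integralHyperplane v c, eval y g = 0)
    (hx : x ∈ torus n) (hxg : eval x g = 0) : x ∈ expMap n '' integralHyperplane v c := by
  set p := toricBinomial v (Complex.exp (2 * Real.pi * Complex.I * c))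
  have hmem {y : Fin n → ℂ} (hy : y ∈ torus n) :
      y ∈ expMap n '' integralHyperplane v c ↔ eval y p = 0 := by
    rw [mem_expMap_image_integralHyperplane_iff hvb, and_iff_right hy,
      eval_toricBinomial_eq_zero_iff hy]
  have hzero (y : Fin n → ℂ) (hy : eval y p = 0) : eval y ((∏ l, X l) * g) = 0 := by
    rw [map_mul, mul_eq_zero, map_prod, Finset.prod_eq_zero_iff]
    by_cases hyt : y ∈ torus n
    · exact .inr (hvan y ((hmem hyt).2 hy))
    · obtain ⟨l, hl⟩ := not_forall_not.1 hyt
      exact .inl ⟨l, Finset.mem_univ l, by rwa [eval_X]⟩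
  obtain ⟨i, hi⟩ := exists_ne_zero_of_dotProduct_eq_one hvb
  obtain ⟨t, ht⟩ := exists_update_mem_integralHyperplane hi 0 c
  have hy := expMap_mem_torus (Function.update 0 i t)
  have hdvd : g ∣ p := dvd_of_eval_mul_eq_zero hg hzero ((hmem hy).1 ⟨_, ht, rfl⟩) (by
    rw [map_prod]
    exact Finset.prod_ne_zero_iff.2 fun l _ => by simpa using hy l)
  exact (hmem hx).2 (zero_dvd_iff.1 (hxg ▸ map_dvd (eval x) hdvd))

end Rationality

section RationalPolynomial

theorem totalDegree_linForm_sub_C {σ k : Type*} [Fintype σ] [Field k] {u : σ → k} (hu : u ≠ 0)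
    (c : k) : (linForm u - C c).totalDegree = 1 := by
  refine le_antisymm ((totalDegree_sub _ _).trans (max_le ?_ (by simp))) ?_
  · refine totalDegree_finsetSum_le fun l _ => (totalDegree_mul _ _).trans ?_
    rw [totalDegree_C, totalDegree_X]
  · obtain ⟨i, hi⟩ := Function.ne_iff.1 hu
    rw [Nat.one_le_iff_ne_zero]
    intro hdeg
    have hpderiv : pderiv i (linForm u - C c) = 0 := by
      rw [totalDegree_eq_zero_iff_eq_C.1 hdeg, pderiv_C]
    rw [map_sub, pderiv_linForm, pderiv_C, sub_zero] at hpderiv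
    exact hi (C_eq_zero.1 hpderiv)

theorem exists_rat_polynomial_integralHyperplane {n : ℕ} {v : Fin n → ℤ} {i : Fin n}
    (hi : v i ≠ 0) (r : ℚ) :
    ∃ p : MvPolynomial (Fin n) ℂ, (∀ m, ∃ q : ℚ, coeff m p = (q : ℂ)) ∧ p.totalDegree = 1 ∧
      integralHyperplane v r = {z | eval z p = 0} := by
  have hv : (Int.cast ∘ v : Fin n → ℂ) ≠ 0 := Function.ne_iff.2 ⟨i, by simpa using hi⟩
  refine ⟨linForm (Int.cast ∘ v) - C (r : ℂ), fun m =>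
    ⟨coeff m (linForm (Int.cast ∘ v) - C r), ?_⟩, totalDegree_linForm_sub_C hv _, ?_⟩
  · have hmap : linForm (Int.cast ∘ v) - C (r : ℂ)
        = MvPolynomial.map (algebraMap ℚ ℂ) (linForm (Int.cast ∘ v) - C r) := by
      simp [linForm]
    rw [hmap, coeff_map, eq_ratCast]
  · ext z
    simp [integralHyperplane, eval_linForm, sub_eq_zero]

end RationalPolynomial

/-! ### The codimension-one case -/

section CodimOne

variable {n : ℕ} {S T : Set (Fin n → ℂ)}

theorem eval_expMap_eq_sum (g : MvPolynomial (Fin n) ℂ) (z : Fin n → ℂ) :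
    eval (expMap n z) g = ∑ m ∈ g.support, coeff m g *
      Complex.exp (eval z (linForm fun l => 2 * Real.pi * Complex.I * m l)) := by
  rw [eval_eq']
  refine Finset.sum_congr rfl fun m _ => ?_
  rw [eval_linForm, dotProduct, Complex.exp_sum]
  congr! 2 with l
  rw [expMap, ← Complex.exp_nat_mul]
  congr 1
  ring

theorem exists_eval_eq_zero_eq_integralHyperplane_of_tangential {f : MvPolynomial (Fin n) ℂ}
    (hf : Prime f) {a : ℂ} (ha : a ≠ 0) {w : Fin n → ℤ} (hw : w ≠ 0)
    (h : ∀ i j, tangential f i j (linForm (a • (Int.cast ∘ w))) = 0) :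
    ∃ (v b : Fin n → ℤ) (c : ℂ), v ⬝ᵥ b = 1 ∧ {z | eval z f = 0} = integralHyperplane v c := by
  obtain ⟨d, v, b, rfl, hvb⟩ := exists_eq_smul_dotProduct_eq_one hw
  obtain ⟨i, hi⟩ := exists_ne_zero_of_dotProduct_eq_one hvb
  have hv : (Int.cast ∘ v : Fin n → ℂ) ≠ 0 := Function.ne_iff.2 ⟨i, Int.cast_ne_zero.2 hi⟩
  have had : a * d ≠ 0 := by
    refine mul_ne_zero ha (Int.cast_ne_zero.2 ?_)
    rintro rfl
    exact hw (zero_smul ℤ v)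
  have hcast : a • (Int.cast ∘ (d • v) : Fin n → ℂ) = (a * d) • (Int.cast ∘ v) := by
    ext l
    simp [mul_assoc]
  rw [hcast] at h
  obtain ⟨c, hc⟩ := exists_eval_eq_zero_iff_dotProduct_eq hf (smul_ne_zero had hv) h
  refine ⟨v, b, c / (a * d), hvb, Set.ext fun z => (hc z).trans ?_⟩
  rw [smul_dotProduct, smul_eq_mul, mul_comm]
  exact (eq_div_iff had).symm

theorem exists_eval_eq_zero_eq_integralHyperplane {f g : MvPolynomial (Fin n) ℂ}
    (hf : Prime f) (hg : g ≠ 0) (h : ∀ z, eval z f = 0 → eval (expMap n z) g = 0) :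
    ∃ (v b : Fin n → ℤ) (c : ℂ), v ⬝ᵥ b = 1 ∧ {z | eval z f = 0} = integralHyperplane v c := by
  classical
  let ω (m : Fin n →₀ ℕ) : Fin n → ℂ := fun l => 2 * Real.pi * Complex.I * m l
  have hsum (z : Fin n → ℂ) (hz : eval z f = 0) :
      ∑ m ∈ g.support, eval z (C (coeff m g)) * Complex.exp (eval z (linForm (ω m))) = 0 := by
    simpa only [eval_C] using (eval_expMap_eq_sum g z).symm.trans (h z hz)
  have hcoeff {m : Fin n →₀ ℕ} (hm : m ∈ g.support) : ¬ f ∣ C (coeff m g) := fun hdvd =>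
    hf.not_isUnit (isUnit_of_dvd_unit hdvd ((mem_support_iff.1 hm).isUnit.map C))
  obtain ⟨m, hm⟩ := support_nonempty.2 hg
  obtain ⟨m₀, m₁, hne, htan⟩ :=
    (isExpRelation_filter ⟨m, hm, hcoeff hm⟩ hsum).exists_tangential_linForm_eq_zero hf
  have hdiff : (fun l => (m₁ l : ℤ) - m₀ l) ≠ 0 := fun h0 => hne <| Finsupp.ext fun l =>
    Int.natCast_inj.1 (sub_eq_zero.1 (congrFun h0 l)).symm
  have hfreq : ω m₁ - ω m₀
      = (2 * Real.pi * Complex.I) • (Int.cast ∘ fun l => (m₁ l : ℤ) - m₀ l) := by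
    ext l
    simp [ω, mul_sub]
  exact exists_eval_eq_zero_eq_integralHyperplane_of_tangential hf Complex.two_pi_I_ne_zero hdiff
    (hfreq ▸ htan)

theorem IsIrrOf.exists_prime (hirr : IsIrrOf (ZClosed n) S) {p : MvPolynomial (Fin n) ℂ}
    (hp : p ≠ 0) (hpS : ∀ z ∈ S, eval z p = 0) :
    ∃ f : MvPolynomial (Fin n) ℂ, Prime f ∧ ∀ z ∈ S, eval z f = 0 := by
  have hne : vanishingIdeal ℂ S ≠ ⊥ := fun hbot =>
    hp (Ideal.mem_bot.1 (hbot ▸ mem_vanishingIdeal_iff_eval.2 hpS))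
  obtain ⟨f, hfS, hf⟩ := (isIrrOf_zClosed_iff_isPrime.1 hirr).exists_mem_prime_of_ne_bot hne
  exact ⟨f, hf, mem_vanishingIdeal_iff_eval.1 hfS⟩

end CodimOne

theorem codim_one_case_general (n : ℕ) (S T : Set (Fin n → ℂ))
    (hSclosed : ZClosedQbar n S) (hSirr : IsIrrOf (ZClosed n) S)
    (hSdim : (n : ℕ∞) ≤ dimOf (ZClosed n) S + 1)
    (hTclosed : ZClosedTorusQbar n T) (hTirr : IsIrrOf (ZClosedTorus n) T) (hTne : T ≠ torus n)
    (hsub : expMap n '' S ⊆ T) :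
    (∃ p : MvPolynomial (Fin n) ℂ,
        (∀ m, ∃ q : ℚ, coeff m p = (q : ℂ)) ∧
        p.totalDegree = 1 ∧
        S = {z | eval z p = 0}) ∧
    IsTorsionTranslateOfSubtorus n T := by
  have hTsub := hTclosed.subset_torus
  have hSne : S ≠ Set.univ := by
    rintro rfl
    refine hTne (hTsub.antisymm fun x hx => ?_)
    obtain ⟨z, rfl⟩ := exists_expMap_eq hx
    exact hsub ⟨z, Set.mem_univ z, rfl⟩
  obtain ⟨p, hp, -, hpS⟩ := hSclosed.exists_ne_zero hSne
  obtain ⟨q, hq, -, hqT⟩ := hTclosed.exists_ne_zero hTne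
  obtain ⟨f, hf, hfS⟩ := hSirr.exists_prime hp hpS
  obtain ⟨g, hg, hgT⟩ := ((isIrrOf_zClosedTorus_iff hTsub).1 hTirr).exists_prime hq hqT
  have hS := eq_eval_eq_zero_of_le_dimOf hSclosed.zClosed hSirr hSdim hf hfS
  obtain ⟨v, b, c, hvb, hfv⟩ := exists_eval_eq_zero_eq_integralHyperplane hf hg.ne_zero
    fun z hz => hgT _ (hsub ⟨z, hS.symm.subset hz, rfl⟩)
  obtain rfl : S = integralHyperplane v c := hS.trans hfv
  obtain ⟨i, hi⟩ := exists_ne_zero_of_dotProduct_eq_one hvb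
  obtain ⟨r, rfl⟩ := exists_rat_eq_of_isAlgebraic_exp
    (isAlgebraic_of_zClosedQbar_integralHyperplane hi hSclosed)
    (isAlgebraic_exp_of_expMap_image_subset hi hTclosed hTne hsub)
  have hT : T = expMap n '' integralHyperplane v r := Set.Subset.antisymm
    (fun x hx => mem_expMap_image_of_eval_eq_zero hvb hg (fun y hy => hgT y (hsub hy))
      (hTsub hx) (hgT x hx)) hsub
  exact ⟨exists_rat_polynomial_integralHyperplane hi r,
    hT ▸ isTorsionTranslateOfSubtorus_expMap_image hvb r⟩

/-- Codimension-one case: if `S ⊆ ℂ^n` is an irreducible Zariski closed subset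
defined over `ℚ̄` of dimension `n-1`, and `T ⊆ (ℂ^*)^n` is an irreducible Zariski
closed subset defined over `ℚ̄` of dimension `n-1` with `exp(S) ⊆ T`, then `S` is
the zero locus of a polynomial of total degree one with rational coefficients,
and `T` is a torsion translate of a subtorus. -/
theorem codim_one_case (n : ℕ) (hn : 2 ≤ n)
    (S T : Set (Fin n → ℂ))
    (hSclosed : ZClosedQbar n S) (hSirr : IsIrrOf (ZClosed n) S)
    (hSdim : dimOf (ZClosed n) S = ((n - 1 : ℕ) : ℕ∞))
    (hTclosed : ZClosedTorusQbar n T) (hTirr : IsIrrOf (ZClosedTorus n) T)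
    (hTdim : dimOf (ZClosedTorus n) T = ((n - 1 : ℕ) : ℕ∞))
    (hsub : expMap n '' S ⊆ T) :
    (∃ p : MvPolynomial (Fin n) ℂ,
        (∀ m, ∃ q : ℚ, coeff m p = (q : ℂ)) ∧
        p.totalDegree = 1 ∧
        S = {z | eval z p = 0}) ∧
    IsTorsionTranslateOfSubtorus n T := by
  refine codim_one_case_general n S T hSclosed hSirr ?_ hTclosed hTirr ?_ hsub
  · rw [hSdim]
    exact_mod_cast (by omega : n ≤ n - 1 + 1)
  · rintro rfl
    exact absurd (hTdim ▸ le_dimOf_torus n) (by exact_mod_cast (by omega : ¬ n ≤ n - 1))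
end
end

section
/- Let Z ⊆ ℂ^n be a Zariski constructible subset (a finite union of differences of Zariski closed subsets of ℂ^n). Then the closure of Z in the Euclidean (standard metric) topology of ℂ^n equals the Zariski closure of Z, i.e., it equals the common zero locus of all polynomials in n complex variables that vanish identically on Z. -/
open MvPolynomial

noncomputable section

/-- Zariski constructible: a finite union of differences of Zariski closed sets. -/
def ZConstructible (n : ℕ) (Z : Set (Fin n → ℂ)) : Prop :=
  ∃ (k : ℕ) (F G : Fin k → Set (Fin n → ℂ)),
    (∀ i, ZClosed n (F i) ∧ ZClosed n (G i)) ∧ Z = ⋃ i, F i \ G i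

/-!
The crux is that the `K`-points of a finitely generated domain `B` at which a given `f ≠ 0` does
not vanish are dense. By Noether normalization `B` is finite over a polynomial ring `A`, in which
`f` has a nonzero multiple, so it is enough that restricting points from `B` to `A` is an open map.
This is continuity of roots: the values at `b : B` of the points over a point `ψ` of `A` are the
roots of the image under `ψ` of the minimal polynomial of `b`, whose coefficients lie in the
integrally closed ring `A`. Consequently the closure of `V(I) \ V(J)` is the union of the sets
`V(P)`, where `P` runs over the finitely many minimal primes of `I` that do not contain `J`.
-/

open Filter Topology
open scoped Polynomial

section Roots

lemma natDegree_ne_zero_of_isRoot {R : Type*} [Semiring R] [Nontrivial R] {p : R[X]}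
    (hp : p.Monic) {z : R} (hz : p.IsRoot z) : p.natDegree ≠ 0 := fun h ↦ by
  simp [(Polynomial.Monic.natDegree_eq_zero hp).1 h] at hz

lemma tendsto_zero_of_norm_pow_le {α E F : Type*} [SeminormedAddCommGroup E]
    [SeminormedAddCommGroup F] {l : Filter α} {u : α → E} {v : α → F} {n : ℕ} (hn : n ≠ 0)
    (hv : Tendsto v l (𝓝 0)) (huv : ∀ a, ‖u a‖ ^ n ≤ ‖v a‖) : Tendsto u l (𝓝 0) := by
  have hpow : Tendsto (fun a ↦ ‖u a‖ ^ n) l (𝓝 0) :=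
    squeeze_zero (fun a ↦ by positivity) huv (tendsto_zero_iff_norm_tendsto_zero.1 hv)
  have hroot := hpow.rpow_const (p := (n : ℝ)⁻¹) (.inr (by positivity))
  rw [Real.zero_rpow (by positivity)] at hroot
  simpa only [Real.pow_rpow_inv_natCast (norm_nonneg _) hn,
    ← tendsto_zero_iff_norm_tendsto_zero] using hroot

variable {K α : Type*} [NormedField K]

lemma exists_isRoot_norm_sub_pow_le {p : K[X]} (hp : p.Monic) (hs : p.Splits)
    (hd : p.natDegree ≠ 0) (z : K) :
    ∃ r, p.IsRoot r ∧ ‖z - r‖ ^ p.natDegree ≤ ‖p.eval z‖ := by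
  classical
  have hne : p.roots.toFinset.Nonempty := by
    rw [Multiset.toFinset_nonempty, ← Multiset.card_pos, ← hs.natDegree_eq_card_roots]
    exact Nat.pos_of_ne_zero hd
  obtain ⟨r, hr, hmin⟩ := p.roots.toFinset.exists_min_image (‖z - ·‖) hne
  refine ⟨r, Polynomial.isRoot_of_mem_roots (Multiset.mem_toFinset.1 hr), ?_⟩
  calc ‖z - r‖ ^ p.natDegree = (p.roots.map fun _ ↦ ‖z - r‖).prod := by
        simp [hs.natDegree_eq_card_roots]
    _ ≤ (p.roots.map fun s ↦ ‖z - s‖).prod :=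
        Multiset.prod_map_le_prod_map₀ _ _ (fun _ _ ↦ norm_nonneg _)
          fun s hs ↦ hmin s (Multiset.mem_toFinset.2 hs)
    _ = ‖p.eval z‖ := by
        rw [hs.eval_eq_prod_roots_of_monic hp]
        exact (Multiset.prod_hom' p.roots (normHom : K →*₀ ℝ) (z - ·))

variable {l : Filter α} {p : α → K[X]} {q : K[X]}

lemma tendsto_cauchyBound (hp : ∀ a, (p a).Monic) (hq : q.Monic)
    (hdeg : ∀ a, (p a).natDegree = q.natDegree)
    (hcoeff : ∀ i, Tendsto (fun a ↦ (p a).coeff i) l (𝓝 (q.coeff i))) :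
    Tendsto (fun a ↦ (p a).cauchyBound) l (𝓝 q.cauchyBound) := by
  simp only [Polynomial.cauchyBound, hdeg, (hp _).leadingCoeff, hq.leadingCoeff, nnnorm_one,
    div_one]
  exact (Tendsto.finset_sup_nhds_apply fun i _ ↦ (hcoeff i).nnnorm).add_const 1

lemma tendsto_eval_of_isRoot (hp : ∀ a, (p a).Monic) (hq : q.Monic)
    (hdeg : ∀ a, (p a).natDegree = q.natDegree)
    (hcoeff : ∀ i, Tendsto (fun a ↦ (p a).coeff i) l (𝓝 (q.coeff i)))
    {t : α → K} (ht : ∀ a, (p a).IsRoot (t a)) :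
    Tendsto (fun a ↦ q.eval (t a)) l (𝓝 0) := by
  have hbdd : IsBoundedUnder (· ≤ ·) l fun a ↦ ‖t a‖ :=
    (NNReal.tendsto_coe.2 (tendsto_cauchyBound hp hq hdeg hcoeff)).isBoundedUnder_le.mono_le
      (.of_forall fun a ↦ ((ht a).norm_lt_cauchyBound (hp a).ne_zero).le)
  have heval (a : α) : q.eval (t a) =
      ∑ i ∈ Finset.range (q.natDegree + 1), (q.coeff i - (p a).coeff i) * t a ^ i := by
    have hzero : (p a).eval (t a) = 0 := ht a
    rw [Polynomial.eval_eq_sum_range, hdeg] at hzero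
    simp only [sub_mul, Finset.sum_sub_distrib, hzero, sub_zero, ← Polynomial.eval_eq_sum_range]
  simp only [heval]
  rw [← Finset.sum_const_zero (s := Finset.range (q.natDegree + 1))]
  refine tendsto_finsetSum _ fun i _ ↦ Tendsto.zero_mul_isBoundedUnder_le ?_ ?_
  · simpa using (hcoeff i).const_sub (q.coeff i)
  · obtain ⟨R, hR⟩ := hbdd
    refine ⟨R ^ i, ?_⟩
    rw [eventually_map] at hR ⊢
    filter_upwards [hR] with a ha
    simpa using pow_le_pow_left₀ (norm_nonneg _) ha i

lemma exists_tendsto_of_isRoot {U : Ultrafilter α} (hs : q.Splits) (hp : ∀ a, (p a).Monic)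
    (hq : q.Monic) (hdeg : ∀ a, (p a).natDegree = q.natDegree)
    (hcoeff : ∀ i, Tendsto (fun a ↦ (p a).coeff i) U (𝓝 (q.coeff i)))
    {t : α → K} (ht : ∀ a, (p a).IsRoot (t a)) : ∃ r, Tendsto t U (𝓝 r) := by
  have hd : q.natDegree ≠ 0 := by
    obtain ⟨a⟩ : Nonempty α := nonempty_of_neBot U
    exact hdeg a ▸ natDegree_ne_zero_of_isRoot (hp a) (ht a)
  choose r hr hle using fun a ↦ exists_isRoot_norm_sub_pow_le hq hs hd (t a)
  have hfin : {x | q.IsRoot x}.Finite := Polynomial.finite_setOfPred_isRoot hq.ne_zero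
  obtain ⟨r₀, -, hr₀⟩ := hfin.isCompact.ultrafilter_le_nhds (U.map r)
    (le_principal_iff.2 (Eventually.of_forall (f := (U : Filter α)) hr))
  have hsub : Tendsto (fun a ↦ t a - r a) U (𝓝 0) :=
    tendsto_zero_of_norm_pow_le hd (tendsto_eval_of_isRoot hp hq hdeg hcoeff ht) hle
  exact ⟨r₀, by simpa using hsub.add (show Tendsto r U (𝓝 r₀) from hr₀)⟩

end Roots

section Points

lemma exists_ringHom_comp_eq_of_isIntegral {R S K : Type*} [CommRing R] [CommRing S] [Field K]
    [IsAlgClosed K] {f : R →+* S} (hf : f.IsIntegral) {e : R →+* K}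
    (hker : RingHom.ker f ≤ RingHom.ker e) : ∃ φ : S →+* K, φ.comp f = e := by
  let _ : Algebra R S := f.toAlgebra
  have : Algebra.IsIntegral R S := ⟨hf⟩
  have : (RingHom.ker e).IsPrime := RingHom.ker_isPrime e
  obtain ⟨Q, -, _, hQ⟩ :=
    Ideal.exists_ideal_over_prime_of_isIntegral (S := S) (RingHom.ker e) ⊥ hker
  have : Q.LiesOver (RingHom.ker e) := ⟨hQ.symm⟩
  let _ : Algebra (R ⧸ RingHom.ker e) K := (RingHom.kerLift e).toAlgebra
  have : Module.IsTorsionFree (R ⧸ RingHom.ker e) K :=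
    Module.isTorsionFree_iff_algebraMap_injective.2 (RingHom.kerLift_injective e)
  have : Module.IsTorsionFree (R ⧸ RingHom.ker e) (S ⧸ Q) :=
    Module.isTorsionFree_iff_faithfulSMul.2 inferInstance
  let φ : S ⧸ Q →ₐ[R ⧸ RingHom.ker e] K := IsAlgClosed.lift
  exact ⟨φ.toRingHom.comp (Ideal.Quotient.mk Q),
    RingHom.ext fun r ↦ φ.commutes (Ideal.Quotient.mk _ r)⟩

variable {K A B : Type*} [Field K] [CommRing A] [CommRing B] [Algebra K A] [Algebra K B]

lemma algHom_eq_of_ker_le {φ ψ : B →ₐ[K] K} (h : RingHom.ker φ ≤ RingHom.ker ψ) : φ = ψ := by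
  ext b
  have hφ : b - algebraMap K B (φ b) ∈ RingHom.ker φ := by simp [RingHom.mem_ker]
  have hψ : ψ (b - algebraMap K B (φ b)) = 0 := h hφ
  rw [map_sub, AlgHom.commutes, Algebra.algebraMap_self_apply, sub_eq_zero] at hψ
  exact hψ.symm

lemma exists_eq_zero_and_forall_ne_zero {T : Set (B →ₐ[K] K)} (hT : T.Finite) {φ : B →ₐ[K] K}
    (hφ : φ ∉ T) : ∃ b, φ b = 0 ∧ ∀ ψ ∈ T, ψ b ≠ 0 := by
  by_contra! h
  have hcover : (RingHom.ker φ : Set B) ⊆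
      ⋃ ψ ∈ (hT.toFinset : Set (B →ₐ[K] K)), (RingHom.ker ψ : Set B) := fun b hb ↦ by
    simpa using h b hb
  obtain ⟨ψ, hψ, hle⟩ := (Ideal.subset_union_prime φ φ
    fun ψ _ _ _ ↦ RingHom.ker_isPrime ψ).1 hcover
  exact hφ (algHom_eq_of_ker_le hle ▸ hT.mem_toFinset.1 hψ)

variable [Algebra A B] [IsScalarTower K A B]

lemma finite_setOf_domRestrict_eq [Module.Finite A B] (ψ : A →ₐ[K] K) :
    {φ : B →ₐ[K] K | φ.domRestrict A = ψ}.Finite := by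
  let _ : Algebra A K := ψ.toRingHom.toAlgebra
  let extend (φ : {φ : B →ₐ[K] K | φ.domRestrict A = ψ}) : B →ₐ[A] K :=
    { (φ : B →ₐ[K] K) with commutes' := DFunLike.congr_fun φ.2 }
  have hinj : Function.Injective extend := fun φ φ' h ↦
    Subtype.ext (AlgHom.ext fun b ↦ DFunLike.congr_fun h b)
  exact Set.finite_coe_iff.1 (Finite.of_injective extend hinj)

lemma isRoot_map_minpoly (φ : B →ₐ[K] K) (b : B) :
    ((minpoly A b).map (φ.domRestrict A : A →+* K)).IsRoot (φ b) := by
  have hzero : φ ((minpoly A b).eval₂ (algebraMap A B) b) = 0 := by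
    rw [← Polynomial.aeval_def, minpoly.aeval, map_zero]
  rw [Polynomial.IsRoot, Polynomial.eval_map]
  exact (Polynomial.hom_eval₂ _ (algebraMap A B) (φ : B →+* K) b).symm.trans hzero

lemma exists_domRestrict_eq_and_apply_eq [IsAlgClosed K] [IsDomain A] [IsIntegrallyClosed A]
    [IsDomain B] [Module.IsTorsionFree A B] [Algebra.IsIntegral A B] {ψ : A →ₐ[K] K} {b : B}
    {t : K} (ht : ((minpoly A b).map (ψ : A →+* K)).IsRoot t) :
    ∃ φ : B →ₐ[K] K, φ.domRestrict A = ψ ∧ φ b = t := by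
  have hint : (Polynomial.aeval (R := A) b : A[X] →+* B).IsIntegral :=
    .tower_top Polynomial.C _ (by
      have hcomp : (Polynomial.aeval (R := A) b : A[X] →+* B).comp Polynomial.C =
          algebraMap A B := RingHom.ext (Polynomial.aeval_C b)
      exact hcomp ▸ algebraMap_isIntegral_iff.2 ‹_›)
  have hker : RingHom.ker (Polynomial.aeval (R := A) b : A[X] →+* B) ≤
      RingHom.ker (Polynomial.eval₂RingHom (ψ : A →+* K) t) := by
    intro p hp
    obtain ⟨q, rfl⟩ := minpoly.isIntegrallyClosed_dvd (Algebra.IsIntegral.isIntegral b) hp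
    rw [Polynomial.IsRoot, Polynomial.eval_map] at ht
    simp [RingHom.mem_ker, ht]
  obtain ⟨φ, hφ⟩ := exists_ringHom_comp_eq_of_isIntegral hint hker
  have hC (a : A) : φ (algebraMap A B a) = ψ a := by
    simpa using RingHom.congr_fun hφ (Polynomial.C a)
  refine ⟨{ φ with commutes' := fun c ↦ ?_ }, AlgHom.ext hC, ?_⟩
  · simpa [IsScalarTower.algebraMap_apply K A B] using hC (algebraMap K A c)
  · simpa using RingHom.congr_fun hφ Polynomial.X

end Points

/-- The topology of pointwise convergence on the `K`-points of the affine scheme `Spec A`, encoded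
as algebra homomorphisms `A →ₐ[K] K`. For `A` a polynomial ring it is the product topology on affine
space. -/
@[reducible]
def pointwiseTopology (K A : Type*) [CommRing K] [TopologicalSpace K] [CommRing A] [Algebra K A] :
    TopologicalSpace (A →ₐ[K] K) :=
  .induced DFunLike.coe inferInstance

attribute [local instance] pointwiseTopology

section PointwiseTopology

variable {K A : Type*} [CommRing K] [TopologicalSpace K] [CommRing A] [Algebra K A]

lemma tendsto_algHom_iff {α : Type*} {l : Filter α} {F : α → A →ₐ[K] K} {φ : A →ₐ[K] K} :
    Tendsto F l (𝓝 φ) ↔ ∀ a, Tendsto (fun i ↦ F i a) l (𝓝 (φ a)) :=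
  (IsInducing.induced (DFunLike.coe : (A →ₐ[K] K) → A → K)).tendsto_nhds_iff.trans tendsto_pi_nhds

lemma continuous_algHom_apply (a : A) : Continuous fun φ : A →ₐ[K] K ↦ φ a :=
  continuous_iff_continuousAt.2 fun _ ↦ tendsto_algHom_iff.1 tendsto_id a

lemma continuous_algHom_iff {X : Type*} [TopologicalSpace X] {F : X → A →ₐ[K] K} :
    Continuous F ↔ ∀ a, Continuous fun x ↦ F x a :=
  continuous_induced_rng.trans continuous_pi_iff

lemma t2Space_algHom [T2Space K] : T2Space (A →ₐ[K] K) :=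
  .of_injective_continuous DFunLike.coe_injective continuous_induced_dom

lemma exists_tendsto_algHom [IsTopologicalRing K] [T2Space K] {α : Type*} {l : Filter α}
    [l.NeBot] {F : α → A →ₐ[K] K} (h : ∀ a, ∃ c, Tendsto (fun i ↦ F i a) l (𝓝 c)) :
    ∃ φ, Tendsto F l (𝓝 φ) := by
  choose v hv using h
  let f : A →ₗ[K] K := linearMapOfTendsto v (fun i ↦ (F i).toLinearMap) (tendsto_pi_nhds.2 hv)
  have hone : f 1 = 1 := tendsto_nhds_unique (hv 1) (by simp)
  have hmul (a b : A) : f (a * b) = f a * f b :=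
    tendsto_nhds_unique (hv (a * b)) (((hv a).mul (hv b)).congr fun i ↦ (map_mul (F i) a b).symm)
  exact ⟨AlgHom.ofLinearMap f hone hmul, tendsto_algHom_iff.2 hv⟩

variable {B : Type*} [CommRing B] [Algebra K B] [Algebra A B] [IsScalarTower K A B]

lemma continuous_domRestrict : Continuous (AlgHom.domRestrict A : (B →ₐ[K] K) → A →ₐ[K] K) :=
  continuous_algHom_iff.2 fun a ↦ continuous_algHom_apply (algebraMap A B a)

end PointwiseTopology

section Restriction

variable {K A B : Type*} [NormedField K] [IsAlgClosed K] [CommRing A] [CommRing B] [Algebra K A]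
  [Algebra K B]

lemma exists_isRoot_map_tendsto {P : A[X]} (hP : P.Monic) {ψ₀ : A →ₐ[K] K} {t₀ : K}
    (ht₀ : (P.map (ψ₀ : A →+* K)).IsRoot t₀) :
    ∃ t : (A →ₐ[K] K) → K, (∀ ψ : A →ₐ[K] K, (P.map (ψ : A →+* K)).IsRoot (t ψ)) ∧
      Tendsto t (𝓝 ψ₀) (𝓝 t₀) := by
  have hd : P.natDegree ≠ 0 :=
    hP.natDegree_map (ψ₀ : A →+* K) ▸ natDegree_ne_zero_of_isRoot (hP.map _) ht₀
  choose t ht hle using fun ψ : A →ₐ[K] K ↦ exists_isRoot_norm_sub_pow_le (hP.map (ψ : A →+* K))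
    (IsAlgClosed.splits _) (by rwa [hP.natDegree_map]) t₀
  simp only [hP.natDegree_map] at hle
  have hcont : Continuous fun ψ : A →ₐ[K] K ↦ (P.map (ψ : A →+* K)).eval t₀ := by
    simp only [Polynomial.eval_map, Polynomial.eval₂_eq_sum_range]
    exact continuous_finsetSum _ fun i _ ↦ (continuous_algHom_apply _).mul continuous_const
  have hlim : Tendsto (fun ψ ↦ t₀ - t ψ) (𝓝 ψ₀) (𝓝 0) :=
    tendsto_zero_of_norm_pow_le hd (ht₀ ▸ hcont.tendsto ψ₀) hle
  exact ⟨t, ht, by simpa using hlim.const_sub t₀⟩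

variable [Algebra A B] [IsScalarTower K A B]

lemma isProperMap_domRestrict [Algebra.IsIntegral A B] :
    IsProperMap (AlgHom.domRestrict A : (B →ₐ[K] K) → A →ₐ[K] K) := by
  have : T2Space (A →ₐ[K] K) := t2Space_algHom
  refine isProperMap_iff_ultrafilter_of_t2.2 ⟨continuous_domRestrict, fun U ψ hψ ↦ ?_⟩
  refine exists_tendsto_algHom (F := id) fun b ↦ ?_
  have hmonic : (minpoly A b).Monic := minpoly.monic (Algebra.IsIntegral.isIntegral b)
  refine exists_tendsto_of_isRoot
    (p := fun φ ↦ (minpoly A b).map (AlgHom.domRestrict A φ : A →+* K))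
    (q := (minpoly A b).map (ψ : A →+* K)) (IsAlgClosed.splits _) (fun _ ↦ hmonic.map _)
    (hmonic.map _) (fun _ ↦ by simp only [hmonic.natDegree_map]) (fun i ↦ ?_)
    fun φ ↦ isRoot_map_minpoly φ b
  simpa using tendsto_algHom_iff.1 hψ ((minpoly A b).coeff i)

lemma isProperMap_domRestrict_prodMk [Algebra.IsIntegral A B] (b : B) :
    IsProperMap fun φ : B →ₐ[K] K ↦ (φ.domRestrict A, φ b) := by
  have : T2Space (A →ₐ[K] K) := t2Space_algHom
  exact isProperMap_of_comp_of_t2 (continuous_domRestrict.prodMk (continuous_algHom_apply b))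
    continuous_fst isProperMap_domRestrict

lemma isOpenMap_domRestrict [IsDomain A] [IsIntegrallyClosed A] [IsDomain B]
    [Module.IsTorsionFree A B] [Module.Finite A B] :
    IsOpenMap (AlgHom.domRestrict A : (B →ₐ[K] K) → A →ₐ[K] K) := by
  intro W hW
  rw [isOpen_iff_mem_nhds]
  rintro _ ⟨φ₀, hφ₀, rfl⟩
  obtain ⟨b, hb₀, hb⟩ := exists_eq_zero_and_forall_ne_zero
    ((finite_setOf_domRestrict_eq (φ₀.domRestrict A)).sdiff (t := {φ₀})) (by simp : φ₀ ∉ _)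
  let Φ (φ : B →ₐ[K] K) : (A →ₐ[K] K) × K := (φ.domRestrict A, φ b)
  have hclosed : IsClosed (Φ '' Wᶜ) :=
    (isProperMap_domRestrict_prodMk b).isClosedMap _ hW.isClosed_compl
  have hnotMem : (φ₀.domRestrict A, (0 : K)) ∉ Φ '' Wᶜ := by
    rintro ⟨φ, hφW, hφ⟩
    obtain ⟨hres, hφb⟩ := Prod.mk.inj hφ
    exact hb φ ⟨hres, fun h ↦ hφW (h ▸ hφ₀)⟩ hφb
  -- Near `φ₀.domRestrict A`, continuity of roots yields roots `t ψ` near `φ₀ b = 0`; each is the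
  -- value at `b` of a point over `ψ`, and that point lies in `W` because `Φ '' Wᶜ` is closed.
  obtain ⟨t, ht, hlim⟩ := exists_isRoot_map_tendsto
    (minpoly.monic (Algebra.IsIntegral.isIntegral b)) (hb₀ ▸ isRoot_map_minpoly (A := A) φ₀ b)
  filter_upwards [(tendsto_id.prodMk_nhds hlim) (hclosed.isOpen_compl.mem_nhds hnotMem)]
    with ψ hψ
  obtain ⟨φ, rfl, hφb⟩ := exists_domRestrict_eq_and_apply_eq (ht ψ)
  by_contra hφ
  exact hψ ⟨φ, fun hφW ↦ hφ ⟨φ, hφW, rfl⟩, Prod.ext rfl hφb⟩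

end Restriction

section Density

variable {K : Type*} [NontriviallyNormedField K]

lemma dense_setOf_eval_ne_zero {σ : Type*} {p : MvPolynomial σ K} (hp : p ≠ 0) :
    Dense {x : σ → K | eval x p ≠ 0} := by
  intro x
  rw [mem_closure_iff_nhds]
  intro U hU
  by_contra hUp
  rw [nhds_pi, Filter.mem_pi] at hU
  obtain ⟨I, -, t, ht, htU⟩ := hU
  refine hp (funext_set t (fun i ↦ infinite_of_mem_nhds (x i) (ht i)) fun y hy ↦ ?_)
  rw [map_zero]
  by_contra hy0
  exact hUp ⟨y, htU fun i _ ↦ hy i trivial, hy0⟩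

lemma dense_setOf_algHom_ne_zero_mvPolynomial {σ : Type*} {p : MvPolynomial σ K} (hp : p ≠ 0) :
    Dense {φ : MvPolynomial σ K →ₐ[K] K | φ p ≠ 0} := by
  have hcont : Continuous fun x : σ → K ↦ (aeval x : MvPolynomial σ K →ₐ[K] K) :=
    continuous_algHom_iff.2 fun q ↦ by simpa only [aeval_eq_eval] using q.continuous_eval
  have hsurj : Function.Surjective fun x : σ → K ↦ (aeval x : MvPolynomial σ K →ₐ[K] K) :=
    fun φ ↦ ⟨fun i ↦ φ (X i), (aeval_unique φ).symm⟩
  refine (hsurj.denseRange.dense_image hcont (dense_setOf_eval_ne_zero hp)).mono ?_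
  rintro _ ⟨x, hx, rfl⟩
  simpa [aeval_eq_eval] using hx

lemma dense_setOf_algHom_ne_zero [IsAlgClosed K] {B : Type*} [CommRing B] [IsDomain B]
    [Algebra K B] [Algebra.FiniteType K B] {f : B} (hf : f ≠ 0) :
    Dense {φ : B →ₐ[K] K | φ f ≠ 0} := by
  obtain ⟨d, g, hinj, hfin⟩ := exists_finite_inj_algHom_of_fg K B
  replace hfin : g.toRingHom.Finite := hfin
  algebraize [g.toRingHom]
  have : IsScalarTower K (MvPolynomial (Fin d) K) B := .of_algebraMap_eq' g.comp_algebraMap.symm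
  have : Module.IsTorsionFree (MvPolynomial (Fin d) K) B :=
    Module.isTorsionFree_iff_algebraMap_injective.2 hinj
  obtain ⟨a, ha, c, hc⟩ := (Algebra.IsIntegral.isIntegral (R := MvPolynomial (Fin d) K)
    f).isAlgebraic.exists_nonzero_dvd (mem_nonZeroDivisors_of_ne_zero hf)
  refine ((dense_setOf_algHom_ne_zero_mvPolynomial ha).preimage isOpenMap_domRestrict).mono ?_
  rintro φ hφ hφf
  apply hφ
  change φ (algebraMap _ B a) = 0
  rw [hc, map_mul, hφf, zero_mul]

end Density

section ZeroLocus

variable {k K σ : Type*} [Field k] [Field K] [Algebra k K]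

lemma isClosed_zeroLocus [TopologicalSpace K] [IsTopologicalRing K] [T1Space K]
    (I : Ideal (MvPolynomial σ k)) : IsClosed (zeroLocus K I) := by
  simp only [zeroLocus, Set.ofPred_forall]
  refine isClosed_biInter fun p _ ↦ isClosed_eq ?_ continuous_const
  simpa only [aeval_def, eval₂_eq_eval_map] using (map (algebraMap k K) p).continuous_eval

lemma mem_zeroLocus_iff_le_vanishingIdeal {I : Ideal (MvPolynomial σ k)} {x : σ → K} :
    x ∈ zeroLocus K I ↔ I ≤ vanishingIdeal k {x} := by
  rw [← le_zeroLocus_iff_le_vanishingIdeal, Set.singleton_subset_iff]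

lemma zeroLocus_finset_inf {ι : Type*} (s : Finset ι) (I : ι → Ideal (MvPolynomial σ k)) :
    zeroLocus K (s.inf I) = ⋃ i ∈ s, zeroLocus K (I i) := by
  ext x
  have hprime : (vanishingIdeal k {x}).IsPrime := inferInstance
  simp only [Set.mem_iUnion₂, mem_zeroLocus_iff_le_vanishingIdeal, hprime.inf_le', exists_prop]

end ZeroLocus

section Closure

variable {K σ : Type*} [NontriviallyNormedField K] [IsAlgClosed K]

lemma zeroLocus_ker_subset_closure {B : Type*} [CommRing B] [IsDomain B] [Algebra K B]
    [Algebra.FiniteType K B] {g : MvPolynomial σ K →ₐ[K] B} (hg : Function.Surjective g)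
    {f : MvPolynomial σ K} (hf : g f ≠ 0) :
    zeroLocus K (RingHom.ker g) ⊆ closure {x ∈ zeroLocus K (RingHom.ker g) | aeval x f ≠ 0} := by
  let point (φ : B →ₐ[K] K) (i : σ) : K := φ (g (X i))
  have hcont : Continuous point := continuous_pi fun i ↦ continuous_algHom_apply _
  have hpoint (φ : B →ₐ[K] K) (p : MvPolynomial σ K) : aeval (point φ) p = φ (g p) :=
    DFunLike.congr_fun (aeval_unique (φ.comp g)).symm p
  intro x hx
  have hker : RingHom.ker g ≤ RingHom.ker (aeval x : MvPolynomial σ K →ₐ[K] K) := hx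
  obtain ⟨φ, hφ⟩ : ∃ φ : B →ₐ[K] K, φ.comp g = aeval x :=
    ⟨AlgHom.liftOfSurjective g hg (aeval x) hker, AlgHom.liftOfSurjective_comp g hg _ hker⟩
  have hφx : point φ = x := funext fun i ↦ (DFunLike.congr_fun hφ (X i)).trans (aeval_X x i)
  refine closure_mono ?_
    (image_closure_subset_closure_image hcont ⟨φ, dense_setOf_algHom_ne_zero hf φ, hφx⟩)
  rintro _ ⟨φ, hφ, rfl⟩
  exact ⟨fun p hp ↦ by rw [hpoint, hp, map_zero], by rwa [hpoint]⟩

lemma zeroLocus_subset_closure_sdiff [Finite σ] {P J : Ideal (MvPolynomial σ K)} [P.IsPrime]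
    (h : ¬ J ≤ P) : zeroLocus K P ⊆ closure (zeroLocus K P \ zeroLocus K J) := by
  obtain ⟨f, hfJ, hfP⟩ := SetLike.not_le_iff_exists.1 h
  have hf : Ideal.Quotient.mkₐ K P f ≠ 0 := mt Ideal.Quotient.eq_zero_iff_mem.1 hfP
  have hle := zeroLocus_ker_subset_closure (Ideal.Quotient.mkₐ_surjective K P) hf
  rw [show RingHom.ker (Ideal.Quotient.mkₐ K P) = P from Ideal.Quotient.mkₐ_ker K P] at hle
  exact hle.trans (closure_mono fun x ⟨hxP, hxf⟩ ↦ ⟨hxP, fun hxJ ↦ hxf (hxJ f hfJ)⟩)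

lemma exists_closure_sdiff_eq_zeroLocus [Finite σ] (I J : Ideal (MvPolynomial σ K)) :
    ∃ L : Ideal (MvPolynomial σ K),
      closure (zeroLocus K I \ zeroLocus K J) = zeroLocus K L := by
  classical
  have hfin : {P ∈ I.minimalPrimes | ¬ J ≤ P}.Finite :=
    (Ideal.finite_minimalPrimes_of_isNoetherianRing _ I).subset (Set.sep_subset _ _)
  refine ⟨hfin.toFinset.inf id, (closure_minimal ?_ (isClosed_zeroLocus _)).antisymm ?_⟩
  · rintro x ⟨hxI, hxJ⟩
    obtain ⟨P, hP, hPx⟩ :=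
      Ideal.exists_minimalPrimes_le (mem_zeroLocus_iff_le_vanishingIdeal.1 hxI)
    have hxP : x ∈ zeroLocus K P := mem_zeroLocus_iff_le_vanishingIdeal.2 hPx
    rw [zeroLocus_finset_inf]
    exact Set.mem_iUnion₂_of_mem
      (hfin.mem_toFinset.2 ⟨hP, fun hJP ↦ hxJ (zeroLocus_anti_mono hJP hxP)⟩) hxP
  · rw [zeroLocus_finset_inf]
    refine Set.iUnion₂_subset fun P hP ↦ ?_
    obtain ⟨hPI, hJP⟩ := hfin.mem_toFinset.1 hP
    have : P.IsPrime := hPI.1.1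
    exact (zeroLocus_subset_closure_sdiff hJP).trans
      (closure_mono (Set.sdiff_subset_sdiff_left (zeroLocus_anti_mono hPI.1.2)))

theorem euclidean_closure_eq_zariski_closure_general [Finite σ] {ι : Type*} [Finite ι]
    (I J : ι → Ideal (MvPolynomial σ K)) :
    closure (⋃ i, zeroLocus K (I i) \ zeroLocus K (J i)) =
      zeroLocus K (vanishingIdeal K (⋃ i, zeroLocus K (I i) \ zeroLocus K (J i))) := by
  cases nonempty_fintype ι
  refine (closure_minimal (zeroLocus_vanishingIdeal_le _) (isClosed_zeroLocus _)).antisymm ?_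
  choose L hL using fun i ↦ exists_closure_sdiff_eq_zeroLocus (I i) (J i)
  have hclosure : closure (⋃ i, zeroLocus K (I i) \ zeroLocus K (J i)) =
      zeroLocus K (Finset.univ.inf L) := by
    simp only [closure_iUnion_of_finite, hL, zeroLocus_finset_inf, Finset.mem_univ, Set.iUnion_true]
  rw [hclosure]
  exact zeroLocus_anti_mono
    (le_zeroLocus_iff_le_vanishingIdeal.1 (subset_closure.trans_eq hclosure))

end Closure

lemma ZClosed.exists_eq_zeroLocus {n : ℕ} {S : Set (Fin n → ℂ)} (hS : ZClosed n S) :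
    ∃ I : Ideal (MvPolynomial (Fin n) ℂ), S = zeroLocus ℂ I := by
  obtain ⟨P, rfl⟩ := hS
  exact ⟨Ideal.span P, by simp [zeroLocus_span, aeval_eq_eval]⟩

/-- For a Zariski constructible set `Z ⊆ ℂ^n`, the closure of `Z` in the
Euclidean topology equals the Zariski closure of `Z`, i.e. the common zero locus
of all polynomials vanishing identically on `Z`. -/
theorem euclidean_closure_eq_zariski_closure (n : ℕ)
    (Z : Set (Fin n → ℂ)) (hZ : ZConstructible n Z) :
    closure Z =
      {z | ∀ p : MvPolynomial (Fin n) ℂ, (∀ w ∈ Z, eval w p = 0) → eval z p = 0} := by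
  obtain ⟨k, F, G, hFG, rfl⟩ := hZ
  choose I hI using fun i ↦ (hFG i).1.exists_eq_zeroLocus
  choose J hJ using fun i ↦ (hFG i).2.exists_eq_zeroLocus
  simpa [hI, hJ, zeroLocus, aeval_eq_eval] using euclidean_closure_eq_zariski_closure_general I J
end
end
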